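/- arXiv:1902.03366 — 2 statements merged into one kernel-verified Lean document; each statement's English description precedes it below -/
import Mathlib

section
/- Third-order-optimal achievability via random coding: Let X₁, X₂, … be i.i.d. random variables with common distribution P_X on a countable alphabet 𝒳 such that V(X) > 0 and T(X) < ∞, and fix ε ∈ (0,1). For each n let M*(n,ε) be the least positive integer M for which an (M,ε) code exists for the vector Xⁿ = (X₁,…,Xₙ) with distribution P_X^{⊗n}. Then there exist a constant K > 0 and n₀ ∈ ℕ such that for all n ≥ n₀: (1/n)·log M*(n,ε) ≤ H(X) + √(V(X)/n)·Q⁻¹(ε) − (log n)/(2n) + K/n. -/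
/-!
Write `ı(x) = log (1 / P x)` and normalize the information to `y(x) = (ı(x) - H) / √V`, which has
mean `0` and variance `1`; its sum over a word of length `n` has the `n`-fold convolution power
`sumLaw` of the law of `y` as its distribution. The code enumerates the set
`S = {x : ∑ y(xᵢ) ≤ b, P(x) > 0}` (`typicalWords`) and declares every other word lost, so
`M*(n, ε) ≤ |S|` as soon as `P[∑ y(Xᵢ) > b] ≤ ε` (`exists_code`).

*Choice of `b`.* By the Berry-Esseen bound (`berry_esseen`) with error `B / √n`, it suffices to take
`b = √n (r + h)` with `1 - Φ(r) = ε` and `h = B / (c √n)`, where `c` is a lower bound for the normal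
density near `r` (`stdNormalCDF_add_ge`). Thus `b = √n r + O(1)`.

*Size of `S`.* `|S| = E[exp(ı(Xⁿ)); ∑ y(Xᵢ) ≤ b]`, a truncated exponential moment of a sum of
independent variables. It is at most `C exp(n H + √V b) / √n` (`sumLaw_exp_le`); the factor `1 / √n`
gained over the trivial bound is the term `-(log n) / (2 n)` of the theorem.

Both probabilistic inputs come from one exchangeability identity for `S_{n+1} = S_n + X`,
`E[S_{n+1} g(S_{n+1})] = (n + 1) E[X (g(S_n + X) - g(S_n))]` (`sumLaw_exchange_sub`).
Applied to increasing bounded `g`, whose left side is at most `√(n + 1) sup |g|`, it says that local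
slopes of `g` have expectation `O(sup |g| / √n)` (`sumLaw_smoothing`): a clipped linear `g` gives
`P[|S_n - u| ≤ h] = O((h + 1) / √n)` (`sumLaw_concentration`), and a stopped exponential gives the
truncated exponential moment. Applied to the solution of Stein's equation for a half-line
(`steinSol`), together with its first-order Taylor expansion (`steinSol_taylor`), it gives the
Berry-Esseen bound; the jump of the derivative of the solution is paid for by
`sumLaw_concentration`.
-/

/-- The standard normal cumulative distribution function `Φ`. -/
noncomputable def stdNormalCDF (z : ℝ) : ℝ :=
  ((ProbabilityTheory.gaussianReal 0 1) (Set.Iic z)).toReal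

section helpers
open MeasureTheory ProbabilityTheory Set Filter Topology
open scoped ENNReal

/-! ### The normal distribution and its tails -/

/-- The standard normal density. -/
noncomputable def stdNormalPDF (x : ℝ) : ℝ := gaussianPDFReal 0 1 x

lemma stdNormalPDF_eq (x : ℝ) :
    stdNormalPDF x = (Real.sqrt (2 * Real.pi))⁻¹ * Real.exp (-x ^ 2 / 2) := by
  simp [stdNormalPDF, gaussianPDFReal_def]

lemma stdNormalPDF_pos (x : ℝ) : 0 < stdNormalPDF x :=
  gaussianPDFReal_pos 0 1 x one_ne_zero

lemma stdNormalPDF_neg (x : ℝ) : stdNormalPDF (-x) = stdNormalPDF x := by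
  simp [stdNormalPDF_eq]

lemma stdNormalPDF_anti {x y : ℝ} (h : |x| ≤ |y|) : stdNormalPDF y ≤ stdNormalPDF x := by
  rw [stdNormalPDF_eq, stdNormalPDF_eq]
  have := sq_le_sq.mpr h
  gcongr

lemma hasDerivAt_stdNormalPDF (x : ℝ) : HasDerivAt stdNormalPDF (-x * stdNormalPDF x) x := by
  have h : HasDerivAt (fun x : ℝ => (Real.sqrt (2 * Real.pi))⁻¹ * Real.exp (-x ^ 2 / 2))
      ((Real.sqrt (2 * Real.pi))⁻¹ * (Real.exp (-x ^ 2 / 2) * (-(2 * x) / 2))) x := by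
    have h1 : HasDerivAt (fun x : ℝ => -x ^ 2 / 2) (-(2 * x) / 2) x := by
      simpa using ((hasDerivAt_pow 2 x).neg.div_const 2)
    exact h1.exp.const_mul _
  have e : stdNormalPDF = fun x : ℝ => (Real.sqrt (2 * Real.pi))⁻¹ * Real.exp (-x ^ 2 / 2) :=
    funext stdNormalPDF_eq
  rw [e]
  convert h using 1
  ring

lemma continuous_stdNormalPDF : Continuous stdNormalPDF :=
  continuous_iff_continuousAt.mpr fun x => (hasDerivAt_stdNormalPDF x).continuousAt

lemma integrable_stdNormalPDF : Integrable stdNormalPDF := integrable_gaussianPDFReal 0 1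

lemma stdNormalCDF_eq_integral (x : ℝ) : stdNormalCDF x = ∫ t in Iic x, stdNormalPDF t := by
  unfold stdNormalCDF
  rw [gaussianReal_apply_eq_integral 0 one_ne_zero, ENNReal.toReal_ofReal]
  · rfl
  · exact integral_nonneg fun t => (stdNormalPDF_pos t).le

lemma one_sub_stdNormalCDF (x : ℝ) : 1 - stdNormalCDF x = ∫ t in Ioi x, stdNormalPDF t := by
  have h := integral_add_compl (measurableSet_Iic (a := x)) integrable_stdNormalPDF
  rw [compl_Iic, ← stdNormalCDF_eq_integral] at h
  have h1 : ∫ t, stdNormalPDF t = 1 := integral_gaussianPDFReal_eq_one 0 one_ne_zero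
  linarith

lemma stdNormalCDF_nonneg (x : ℝ) : 0 ≤ stdNormalCDF x := ENNReal.toReal_nonneg

lemma stdNormalCDF_le_one (x : ℝ) : stdNormalCDF x ≤ 1 := by
  have : 0 ≤ 1 - stdNormalCDF x := by
    rw [one_sub_stdNormalCDF]
    exact integral_nonneg fun t => (stdNormalPDF_pos t).le
  linarith

lemma hasDerivAt_stdNormalCDF (x : ℝ) : HasDerivAt stdNormalCDF (stdNormalPDF x) x := by
  have e : ∀ y, stdNormalCDF y = stdNormalCDF x + ∫ t in x..y, stdNormalPDF t := by
    intro y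
    rw [stdNormalCDF_eq_integral, stdNormalCDF_eq_integral,
      ← intervalIntegral.integral_Iic_sub_Iic integrable_stdNormalPDF.integrableOn
        integrable_stdNormalPDF.integrableOn]
    ring
  rw [funext e]
  refine HasDerivAt.const_add _ ?_
  exact intervalIntegral.integral_hasDerivAt_right
    integrable_stdNormalPDF.intervalIntegrable
    continuous_stdNormalPDF.stronglyMeasurable.stronglyMeasurableAtFilter
    continuous_stdNormalPDF.continuousAt

lemma continuous_stdNormalCDF : Continuous stdNormalCDF :=
  continuous_iff_continuousAt.mpr fun x => (hasDerivAt_stdNormalCDF x).continuousAt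

lemma monotone_stdNormalCDF : Monotone stdNormalCDF :=
  monotone_of_hasDerivAt_nonneg hasDerivAt_stdNormalCDF fun x => (stdNormalPDF_pos x).le

lemma stdNormalCDF_neg (x : ℝ) : stdNormalCDF (-x) = 1 - stdNormalCDF x := by
  rw [one_sub_stdNormalCDF, stdNormalCDF_eq_integral, ← integral_comp_neg_Ioi]
  simp [stdNormalPDF_neg]

lemma tendsto_stdNormalPDF : Tendsto stdNormalPDF atTop (𝓝 0) := by
  have h : Tendsto (fun x : ℝ => (Real.sqrt (2 * Real.pi))⁻¹ * Real.exp (-x ^ 2 / 2)) atTop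
      (𝓝 ((Real.sqrt (2 * Real.pi))⁻¹ * 0)) := by
    refine Tendsto.const_mul _ (Real.tendsto_exp_atBot.comp ?_)
    have : Tendsto (fun x : ℝ => x ^ 2 / 2) atTop atTop :=
      (tendsto_pow_atTop two_ne_zero).atTop_div_const two_pos
    refine (tendsto_neg_atTop_atBot.comp this).congr fun x => ?_
    simp [neg_div]
  rw [mul_zero] at h
  exact h.congr fun x => (stdNormalPDF_eq x).symm

/-- The Mills ratio bound. -/
lemma mul_tail_le {x : ℝ} (hx : 0 ≤ x) : x * (1 - stdNormalCDF x) ≤ stdNormalPDF x := by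
  have hd : ∀ t ∈ Ici x, HasDerivAt (fun t => -stdNormalPDF t) (t * stdNormalPDF t) t := by
    intro t _
    simpa using (hasDerivAt_stdNormalPDF t).fun_neg
  have hp : ∀ t ∈ Ioi x, 0 ≤ t * stdNormalPDF t := fun t ht =>
    mul_nonneg (hx.trans (le_of_lt ht)) (stdNormalPDF_pos t).le
  have ht : Tendsto (fun t => -stdNormalPDF t) atTop (𝓝 0) := by
    simpa using tendsto_stdNormalPDF.neg
  have h1 := integral_Ioi_of_hasDerivAt_of_nonneg' hd hp ht
  have h2 := integrableOn_Ioi_deriv_of_nonneg' hd hp ht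
  rw [one_sub_stdNormalCDF, ← integral_const_mul]
  calc ∫ t in Ioi x, x * stdNormalPDF t ≤ ∫ t in Ioi x, t * stdNormalPDF t := by
        refine setIntegral_mono_on (integrable_stdNormalPDF.integrableOn.const_mul x) h2
          measurableSet_Ioi fun t ht => ?_
        exact mul_le_mul_of_nonneg_right (le_of_lt ht) (stdNormalPDF_pos t).le
    _ = stdNormalPDF x := by rw [h1]; ring

lemma tail_le {x : ℝ} (hx : 0 ≤ x) :
    1 - stdNormalCDF x ≤ (1 + 1 / stdNormalPDF 1) * stdNormalPDF x := by
  have hp := stdNormalPDF_pos x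
  have hp1 := stdNormalPDF_pos 1
  have h0 : 0 ≤ stdNormalPDF x / stdNormalPDF 1 := by positivity
  have hc := stdNormalCDF_nonneg x
  have hc1 := stdNormalCDF_le_one x
  have e : (1 + 1 / stdNormalPDF 1) * stdNormalPDF x
      = stdNormalPDF x + stdNormalPDF x / stdNormalPDF 1 := by ring
  rw [e]
  rcases le_total 1 x with h | h
  · have := mul_tail_le hx
    nlinarith
  · have : stdNormalPDF 1 ≤ stdNormalPDF x :=
      stdNormalPDF_anti (by rw [abs_of_nonneg hx, abs_one]; exact h)
    have : 1 ≤ stdNormalPDF x / stdNormalPDF 1 := by rwa [one_le_div hp1]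
    linarith

/-! ### The solution of Stein's equation for a half-line -/

/-- The bounded solution `f` of Stein's equation `f'(w) - w f(w) = 1{w ≤ z} - Φ(z)`. -/
noncomputable def steinSol (z w : ℝ) : ℝ :=
  stdNormalCDF (min w z) * (1 - stdNormalCDF (max w z)) / stdNormalPDF w

/-- The derivative of `steinSol z` away from `z`; its value at `z` is the left derivative. -/
noncomputable def steinDeriv (z w : ℝ) : ℝ :=
  w * steinSol z w + (if w ≤ z then 1 else 0) - stdNormalCDF z

/-- A uniform bound for `steinSol`. -/
noncomputable def steinConst : ℝ := 1 + 1 / stdNormalPDF 1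

lemma steinConst_pos : 0 < steinConst := by
  have := stdNormalPDF_pos 1
  unfold steinConst; positivity

lemma steinSol_nonneg (z w : ℝ) : 0 ≤ steinSol z w :=
  div_nonneg (mul_nonneg (stdNormalCDF_nonneg _) (sub_nonneg.2 (stdNormalCDF_le_one _)))
    (stdNormalPDF_pos w).le

lemma steinSol_le_left (z w : ℝ) : steinSol z w ≤ stdNormalCDF w / stdNormalPDF w := by
  have h1 := monotone_stdNormalCDF (min_le_left w z)
  have h2 := stdNormalCDF_nonneg (max w z)
  have h3 := stdNormalCDF_nonneg (min w z)
  exact div_le_div_of_nonneg_right (by nlinarith) (stdNormalPDF_pos w).le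

lemma steinSol_le_right (z w : ℝ) : steinSol z w ≤ (1 - stdNormalCDF w) / stdNormalPDF w := by
  have h1 := monotone_stdNormalCDF (le_max_left w z)
  have h2 := stdNormalCDF_le_one (min w z)
  have h3 := stdNormalCDF_le_one (max w z)
  exact div_le_div_of_nonneg_right (by nlinarith) (stdNormalPDF_pos w).le

lemma steinSol_le (z w : ℝ) : steinSol z w ≤ steinConst := by
  have hp := stdNormalPDF_pos w
  rcases le_total 0 w with h | h
  · exact (steinSol_le_right z w).trans ((div_le_iff₀ hp).2 (tail_le h))
  · have := tail_le (neg_nonneg.2 h)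
    rw [stdNormalCDF_neg, stdNormalPDF_neg, sub_sub_cancel] at this
    exact (steinSol_le_left z w).trans ((div_le_iff₀ hp).2 this)

lemma abs_steinSol_le (z w : ℝ) : |steinSol z w| ≤ steinConst := by
  rw [abs_of_nonneg (steinSol_nonneg z w)]; exact steinSol_le z w

lemma abs_mul_steinSol_le (z w : ℝ) : |w * steinSol z w| ≤ 1 := by
  have hp := stdNormalPDF_pos w
  rw [abs_mul, abs_of_nonneg (steinSol_nonneg z w)]
  rcases le_total 0 w with h | h
  · rw [abs_of_nonneg h]
    calc w * steinSol z w ≤ w * ((1 - stdNormalCDF w) / stdNormalPDF w) :=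
          mul_le_mul_of_nonneg_left (steinSol_le_right z w) h
      _ ≤ 1 := by rw [← mul_div_assoc, div_le_one hp]; exact mul_tail_le h
  · rw [abs_of_nonpos h]
    have := mul_tail_le (neg_nonneg.2 h)
    rw [stdNormalCDF_neg, stdNormalPDF_neg, sub_sub_cancel] at this
    calc -w * steinSol z w ≤ -w * (stdNormalCDF w / stdNormalPDF w) :=
          mul_le_mul_of_nonneg_left (steinSol_le_left z w) (neg_nonneg.2 h)
      _ ≤ 1 := by rw [← mul_div_assoc, div_le_one hp]; exact this

lemma abs_steinDeriv_le (z w : ℝ) : |steinDeriv z w| ≤ 2 := by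
  have h1 := abs_le.1 (abs_mul_steinSol_le z w)
  have h2 := stdNormalCDF_nonneg z
  have h3 := stdNormalCDF_le_one z
  unfold steinDeriv
  rw [abs_le]
  split_ifs <;> constructor <;> linarith

lemma continuous_steinSol (z : ℝ) : Continuous (steinSol z) := by
  unfold steinSol
  refine Continuous.div ?_ continuous_stdNormalPDF fun w => (stdNormalPDF_pos w).ne'
  exact (continuous_stdNormalCDF.comp (by fun_prop)).mul
    (continuous_const.sub (continuous_stdNormalCDF.comp (by fun_prop)))

lemma measurable_steinDeriv (z : ℝ) : Measurable (steinDeriv z) := by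
  unfold steinDeriv
  exact ((measurable_id.mul (continuous_steinSol z).measurable).add
    (Measurable.ite measurableSet_Iic measurable_const measurable_const)).sub measurable_const

lemma hasDerivAt_steinSol {z w : ℝ} (h : w ≠ z) :
    HasDerivAt (steinSol z) (steinDeriv z w) w := by
  have hp := (stdNormalPDF_pos w).ne'
  rcases lt_or_gt_of_ne h with h | h
  · have e : steinSol z =ᶠ[𝓝 w]
        fun w => stdNormalCDF w * (1 - stdNormalCDF z) / stdNormalPDF w := by
      filter_upwards [Iio_mem_nhds h] with y hy
      rw [steinSol, min_eq_left (le_of_lt hy), max_eq_right (le_of_lt hy)]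
    refine HasDerivAt.congr_of_eventuallyEq ?_ e
    refine (((hasDerivAt_stdNormalCDF w).mul_const (1 - stdNormalCDF z)).fun_div
      (hasDerivAt_stdNormalPDF w) hp).congr_deriv ?_
    simp only [steinDeriv, e.eq_of_nhds, if_pos h.le]
    field_simp
    ring
  · have e : steinSol z =ᶠ[𝓝 w]
        fun w => stdNormalCDF z * (1 - stdNormalCDF w) / stdNormalPDF w := by
      filter_upwards [Ioi_mem_nhds h] with y hy
      rw [steinSol, min_eq_right (le_of_lt hy), max_eq_left (le_of_lt hy)]
    refine HasDerivAt.congr_of_eventuallyEq ?_ e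
    refine ((((hasDerivAt_stdNormalCDF w).const_sub 1).const_mul (stdNormalCDF z)).fun_div
      (hasDerivAt_stdNormalPDF w) hp).congr_deriv ?_
    simp only [steinDeriv, e.eq_of_nhds, if_neg (not_le.2 h)]
    field_simp
    ring

/-- The mean value theorem for `steinSol z` on an interval whose interior avoids `z`. -/
lemma steinSol_mvt {z x y : ℝ} (hxy : x < y) (hz : z ∉ Ioo x y) :
    ∃ ξ ∈ Ioo x y, steinSol z y - steinSol z x = (y - x) * steinDeriv z ξ := by
  obtain ⟨ξ, hξ, h⟩ := exists_hasDerivAt_eq_slope (steinSol z) (steinDeriv z) hxy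
    (continuous_steinSol z).continuousOn
    (fun w hw => hasDerivAt_steinSol (fun e => hz (e ▸ hw)))
  refine ⟨ξ, hξ, ?_⟩
  have : y - x ≠ 0 := (sub_pos.2 hxy).ne'
  rw [h]; field_simp

lemma steinSol_lipschitz (z x y : ℝ) : |steinSol z y - steinSol z x| ≤ 2 * |y - x| := by
  have key : ∀ x y, x < y → z ∉ Ioo x y → |steinSol z y - steinSol z x| ≤ 2 * (y - x) := by
    intro x y hxy hz
    obtain ⟨ξ, -, h⟩ := steinSol_mvt hxy hz
    rw [h, abs_mul, abs_of_pos (sub_pos.2 hxy), mul_comm]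
    exact mul_le_mul_of_nonneg_right (abs_steinDeriv_le z ξ) (sub_pos.2 hxy).le
  have key2 : ∀ x y, x < y → |steinSol z y - steinSol z x| ≤ 2 * (y - x) := by
    intro x y hxy
    by_cases hz : z ∈ Ioo x y
    · have h1 := key x z hz.1 (fun h => lt_irrefl _ h.2)
      have h2 := key z y hz.2 (fun h => lt_irrefl _ h.1)
      have := abs_add_le (steinSol z y - steinSol z z) (steinSol z z - steinSol z x)
      rw [sub_add_sub_cancel] at this
      linarith
    · exact key x y hxy hz
  rcases lt_trichotomy x y with h | h | h
  · rw [abs_of_pos (sub_pos.2 h)]; exact key2 x y h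
  · simp [h]
  · rw [abs_sub_comm, abs_sub_comm y x, abs_of_pos (sub_pos.2 h)]; exact key2 y x h

/-- Increments of `steinDeriv z` are Lipschitz, with a constant growing linearly in `w`, as long as
the jump at `z` is not crossed. -/
lemma steinDeriv_sub_le {z w u : ℝ} (hz : |u| < |w - z|) :
    |steinDeriv z (w + u) - steinDeriv z w| ≤ |u| * (2 * |w| + steinConst) := by
  have hif : (if w + u ≤ z then (1 : ℝ) else 0) = if w ≤ z then 1 else 0 := by
    have h1 := le_abs_self u
    have h2 := neg_abs_le u
    rcases le_or_gt w z with h | h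
    · rw [abs_of_nonpos (a := w - z) (by linarith)] at hz
      rw [if_pos h, if_pos (by linarith)]
    · rw [abs_of_pos (a := w - z) (by linarith)] at hz
      rw [if_neg (not_le.2 h), if_neg (by linarith)]
  have e : steinDeriv z (w + u) - steinDeriv z w
      = w * (steinSol z (w + u) - steinSol z w) + u * steinSol z (w + u) := by
    unfold steinDeriv
    rw [hif]; ring
  rw [e]
  refine (abs_add_le _ _).trans ?_
  rw [abs_mul, abs_mul]
  have h1 := steinSol_lipschitz z w (w + u)
  rw [add_sub_cancel_left] at h1
  have h2 := abs_steinSol_le z (w + u)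
  nlinarith [abs_nonneg w, abs_nonneg u]

/-- The increments of `steinDeriv z` in all cases: crossing the jump costs at most `4`. -/
lemma steinDeriv_sub_le' (z w u : ℝ) :
    |steinDeriv z (w + u) - steinDeriv z w|
      ≤ |u| * (2 * |w| + steinConst) + 4 * (if |w - z| ≤ |u| then 1 else 0) := by
  split_ifs with h
  · have h1 := abs_steinDeriv_le z (w + u)
    have h2 := abs_steinDeriv_le z w
    have h3 := abs_sub (steinDeriv z (w + u)) (steinDeriv z w)
    have h4 : 0 ≤ |u| * (2 * |w| + steinConst) := by
      have := steinConst_pos; positivity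
    linarith
  · simpa using steinDeriv_sub_le (not_le.1 h)

/-- First-order Taylor expansion of `steinSol z`. -/
lemma steinSol_taylor (z w u : ℝ) :
    |steinSol z (w + u) - steinSol z w - u * steinDeriv z w|
      ≤ |u| * (|u| * (2 * |w| + steinConst) + 4 * (if |w - z| ≤ |u| then 1 else 0)) := by
  have hC := steinConst_pos
  split_ifs with h
  · have h1 := steinSol_lipschitz z w (w + u)
    rw [add_sub_cancel_left] at h1
    have h2 := abs_steinDeriv_le z w
    have h3 := abs_sub (steinSol z (w + u) - steinSol z w) (u * steinDeriv z w)
    rw [abs_mul u] at h3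
    have h4 : 0 ≤ |u| * (|u| * (2 * |w| + steinConst)) := by positivity
    nlinarith [abs_nonneg u]
  · rw [not_le] at h
    -- the mean value theorem gives an intermediate point `w + v` with `|v| ≤ |u|`
    have key : ∃ v, |v| ≤ |u| ∧
        steinSol z (w + u) - steinSol z w = u * steinDeriv z (w + v) := by
      rcases lt_trichotomy 0 u with hu | hu | hu
      · obtain ⟨ξ, hξ, e⟩ := steinSol_mvt (z := z) (x := w) (y := w + u) (by linarith) (by
          intro hz
          rw [abs_of_pos hu, abs_of_neg (by linarith [hz.1])] at h
          linarith [hz.2])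
        refine ⟨ξ - w, ?_, ?_⟩
        · rw [abs_of_pos hu, abs_of_pos (by linarith [hξ.1])]; linarith [hξ.2]
        · rw [e]; simp
      · exact ⟨0, by simp, by simp [← hu]⟩
      · obtain ⟨ξ, hξ, e⟩ := steinSol_mvt (z := z) (x := w + u) (y := w) (by linarith) (by
          intro hz
          rw [abs_of_neg hu, abs_of_pos (by linarith [hz.2])] at h
          linarith [hz.1])
        refine ⟨ξ - w, ?_, ?_⟩
        · rw [abs_of_neg hu, abs_of_neg (by linarith [hξ.2])]; linarith [hξ.1]
        · rw [add_sub_cancel]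
          linear_combination -e
    obtain ⟨v, hv, e⟩ := key
    rw [e, ← mul_sub, abs_mul]
    have := steinDeriv_sub_le (hv.trans_lt h)
    have h5 : |v| * (2 * |w| + steinConst) ≤ |u| * (2 * |w| + steinConst) :=
      mul_le_mul_of_nonneg_right hv (by positivity)
    rw [mul_zero, add_zero]
    exact mul_le_mul_of_nonneg_left (this.trans h5) (abs_nonneg u)

/-! ### Convolution powers -/

/-- The law of the sum of `n` independent random variables with law `μ`. -/
noncomputable def sumLaw (μ : Measure ℝ) : ℕ → Measure ℝ
  | 0 => Measure.dirac 0
  | n + 1 => (sumLaw μ n).conv μ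

/-- `μ` is a law with mean `0`, variance `1` and a finite third absolute moment. -/
structure IsStandardized (μ : Measure ℝ) : Prop where
  prob : IsProbabilityMeasure μ
  int3 : Integrable (fun x => |x| ^ 3) μ
  mean : ∫ x, x ∂μ = 0
  var : ∫ x, x ^ 2 ∂μ = 1

instance sumLaw_isProb (μ : Measure ℝ) [IsProbabilityMeasure μ] (n : ℕ) :
    IsProbabilityMeasure (sumLaw μ n) := by
  induction n with
  | zero => unfold sumLaw; infer_instance
  | succ n ih => unfold sumLaw Measure.conv; exact Measure.isProbabilityMeasure_map (by fun_prop)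

lemma IsStandardized.int1 {μ : Measure ℝ} (hμ : IsStandardized μ) :
    Integrable (fun x : ℝ => x) μ := by
  have := hμ.prob
  refine Integrable.mono' ((integrable_const (1 : ℝ)).add hμ.int3) (by fun_prop)
    (Eventually.of_forall fun x => ?_)
  simp only [Real.norm_eq_abs, Pi.add_apply]
  nlinarith [abs_nonneg x, sq_nonneg (|x| - 1), mul_nonneg (abs_nonneg x) (sq_nonneg (|x| - 1))]

lemma IsStandardized.int2 {μ : Measure ℝ} (hμ : IsStandardized μ) :
    Integrable (fun x : ℝ => x ^ 2) μ := by
  have := hμ.prob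
  refine Integrable.mono' ((integrable_const (1 : ℝ)).add hμ.int3) (by fun_prop)
    (Eventually.of_forall fun x => ?_)
  simp only [Real.norm_eq_abs, Pi.add_apply]
  rw [abs_of_nonneg (sq_nonneg x), ← sq_abs x]
  nlinarith [abs_nonneg x, sq_nonneg (|x| - 1), mul_nonneg (abs_nonneg x) (sq_nonneg (|x| - 1))]

lemma integral_sumLaw_succ {μ : Measure ℝ} (n : ℕ) {f : ℝ → ℝ} (hf : Measurable f) :
    ∫ s, f s ∂(sumLaw μ (n + 1)) = ∫ p, f (p.1 + p.2) ∂((sumLaw μ n).prod μ) := by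
  rw [sumLaw, Measure.conv, integral_map (by fun_prop) hf.aestronglyMeasurable]

lemma integrable_sumLaw_succ {μ : Measure ℝ} (n : ℕ) {f : ℝ → ℝ} (hf : Measurable f) :
    Integrable f (sumLaw μ (n + 1))
      ↔ Integrable (fun p : ℝ × ℝ => f (p.1 + p.2)) ((sumLaw μ n).prod μ) := by
  rw [sumLaw, Measure.conv, integrable_map_measure hf.aestronglyMeasurable (by fun_prop)]
  rfl

lemma integrable_of_abs_le {α : Type*} {m : MeasurableSpace α} {μ : Measure α} [IsFiniteMeasure μ]
    {g : α → ℝ} (hg : Measurable g) {M : ℝ} (hM : ∀ s, |g s| ≤ M) : Integrable g μ :=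
  Integrable.mono' (integrable_const M) hg.aestronglyMeasurable (Eventually.of_forall hM)

lemma sumLaw_moments {μ : Measure ℝ} (hμ : IsStandardized μ) (n : ℕ) :
    Integrable (fun s : ℝ => s) (sumLaw μ n) ∧ Integrable (fun s : ℝ => s ^ 2) (sumLaw μ n)
      ∧ ∫ s, s ^ 2 ∂(sumLaw μ n) = n := by
  have := hμ.prob
  induction n with
  | zero =>
    refine ⟨integrable_dirac (by simp), integrable_dirac (by simp), ?_⟩
    simp [sumLaw]
  | succ n ih =>
    obtain ⟨h1, h2, h3⟩ := ih
    have i1 : Integrable (fun p : ℝ × ℝ => p.1 ^ 2) ((sumLaw μ n).prod μ) := h2.comp_fst μ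
    have i2 : Integrable (fun p : ℝ × ℝ => 2 * (p.1 * p.2)) ((sumLaw μ n).prod μ) :=
      (h1.mul_prod hμ.int1).const_mul 2
    have i3 : Integrable (fun p : ℝ × ℝ => p.2 ^ 2) ((sumLaw μ n).prod μ) := hμ.int2.comp_snd _
    have e : (fun p : ℝ × ℝ => (p.1 + p.2) ^ 2)
        = fun p => (p.1 ^ 2 + 2 * (p.1 * p.2)) + p.2 ^ 2 := by
      funext p; ring
    refine ⟨(integrable_sumLaw_succ n measurable_id).2
      ((h1.comp_fst μ).add (hμ.int1.comp_snd _)),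
      (integrable_sumLaw_succ n (by fun_prop)).2 ?_, ?_⟩
    · rw [e]; exact (i1.add i2).add i3
    · rw [integral_sumLaw_succ n (by fun_prop), e]
      erw [integral_add (i1.add i2) i3]
      erw [integral_add i1 i2]
      rw [integral_const_mul, integral_prod_mul (fun x : ℝ => x) fun x : ℝ => x,
        hμ.mean, integral_fun_fst (fun x : ℝ => x ^ 2), integral_fun_snd (fun x : ℝ => x ^ 2),
        h3, hμ.var]
      simp

/-- By Cauchy-Schwarz (here AM-GM), `E|S| ≤ √n` for a sum `S` of `n` terms. -/
lemma sumLaw_abs_le {μ : Measure ℝ} (hμ : IsStandardized μ) (n : ℕ) {r : ℝ} (hr : 0 < r)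
    (hn : (n : ℝ) ≤ r ^ 2) : ∫ s, |s| ∂(sumLaw μ n) ≤ r := by
  have := hμ.prob
  obtain ⟨h1, h2, h3⟩ := sumLaw_moments hμ n
  have hi : Integrable (fun s : ℝ => (r + s ^ 2 / r) / 2) (sumLaw μ n) :=
    ((integrable_const r).add (h2.div_const r)).div_const 2
  calc ∫ s, |s| ∂(sumLaw μ n) ≤ ∫ s, (r + s ^ 2 / r) / 2 ∂(sumLaw μ n) := by
        refine integral_mono h1.abs hi fun s => ?_
        have : 0 ≤ (r - |s|) ^ 2 / r := by positivity
        have e : (r - |s|) ^ 2 / r = r + s ^ 2 / r - 2 * |s| := by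
          rw [sub_sq, sq_abs]; field_simp; ring
        simp only
        linarith
    _ = (r + n / r) / 2 := by
        rw [integral_div, integral_add (integrable_const r) (h2.div_const r), integral_div, h3]
        simp
    _ ≤ r := by
        have : n / r ≤ r := by rw [div_le_iff₀ hr]; nlinarith
        linarith

/-- Exchangeability of the summands: `E[S g(S)] = (n + 1) E[X g(T + X)]` when `S = T + X`
is a sum of `n + 1` independent copies of `X`, of which `T` collects the first `n`. -/
lemma sumLaw_exchange {μ : Measure ℝ} (hμ : IsStandardized μ) (n : ℕ) {g : ℝ → ℝ}
    (hg : Measurable g) {M : ℝ} (hM : ∀ s, |g s| ≤ M) :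
    ∫ s, s * g s ∂(sumLaw μ (n + 1))
      = (n + 1) * ∫ p, p.2 * g (p.1 + p.2) ∂((sumLaw μ n).prod μ) := by
  have := hμ.prob
  induction n generalizing g with
  | zero =>
    rw [integral_sumLaw_succ 0 (by fun_prop)]
    simp only [sumLaw]
    rw [Measure.dirac_prod, integral_map (by fun_prop) (by fun_prop),
      integral_map (by fun_prop) (by fun_prop)]
    simp
  | succ n ih =>
    have i2 : Integrable (fun p : ℝ × ℝ => p.2 * g (p.1 + p.2)) ((sumLaw μ (n + 1)).prod μ) :=
      (hμ.int1.comp_snd _).mul_bdd (Measurable.aestronglyMeasurable (by fun_prop)) (Eventually.of_forall fun p => hM _)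
    have i2' : Integrable (fun p : ℝ × ℝ => p.1 * g (p.1 + p.2)) ((sumLaw μ (n + 1)).prod μ) :=
      ((sumLaw_moments hμ (n + 1)).1.comp_fst _).mul_bdd (Measurable.aestronglyMeasurable (by fun_prop))
        (Eventually.of_forall fun p => hM _)
    -- `k u = E[X g(u + X)]`
    set k : ℝ → ℝ := fun u => ∫ y, y * g (u + y) ∂μ with hk
    have hkm : Measurable k := by
      have : Measurable (Function.uncurry fun u y : ℝ => y * g (u + y)) := by
        unfold Function.uncurry; fun_prop
      exact this.stronglyMeasurable.integral_prod_right.measurable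
    have hkb : ∀ u, |k u| ≤ (∫ y, |y| ∂μ) * M := by
      intro u
      rw [← integral_mul_const, ← Real.norm_eq_abs]
      refine norm_integral_le_of_norm_le (hμ.int1.abs.mul_const M)
        (Eventually.of_forall fun y => ?_)
      rw [Real.norm_eq_abs, abs_mul]
      exact mul_le_mul_of_nonneg_left (hM _) (abs_nonneg y)
    have hk2 : ∫ p, p.2 * g (p.1 + p.2) ∂((sumLaw μ (n + 1)).prod μ)
        = ∫ u, k u ∂(sumLaw μ (n + 1)) := integral_prod _ i2
    have hk1 : ∫ p, p.1 * g (p.1 + p.2) ∂((sumLaw μ (n + 1)).prod μ)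
        = (n + 1) * ∫ u, k u ∂(sumLaw μ (n + 1)) := by
      rw [integral_prod_symm _ i2', integral_sumLaw_succ n hkm,
        integral_prod_symm _ (integrable_of_abs_le (by fun_prop) fun p => hkb _),
        ← integral_const_mul]
      congr 1
      funext x
      have := ih (g := fun s => g (s + x)) (by fun_prop) (fun s => hM _)
      simp only
      rw [this]
      congr 1
      rw [integral_prod _ ((hμ.int1.comp_snd _).mul_bdd (Measurable.aestronglyMeasurable (by fun_prop))
        (Eventually.of_forall fun p => hM _))]
      congr 1
      funext w
      simp only [hk]
      congr 1
      funext y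
      congr 2
      ring
    have e : (fun p : ℝ × ℝ => (p.1 + p.2) * g (p.1 + p.2))
        = fun p => p.1 * g (p.1 + p.2) + p.2 * g (p.1 + p.2) := by funext p; ring
    rw [integral_sumLaw_succ (n + 1) (by fun_prop), e, integral_add i2' i2, hk1, hk2]
    push_cast; ring

lemma sumLaw_exchange_sub {μ : Measure ℝ} (hμ : IsStandardized μ) (n : ℕ) {g : ℝ → ℝ}
    (hg : Measurable g) {M : ℝ} (hM : ∀ s, |g s| ≤ M) :
    Integrable (fun p : ℝ × ℝ => p.2 * (g (p.1 + p.2) - g p.1)) ((sumLaw μ n).prod μ) ∧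
    ∫ s, s * g s ∂(sumLaw μ (n + 1))
      = (n + 1) * ∫ p, p.2 * (g (p.1 + p.2) - g p.1) ∂((sumLaw μ n).prod μ) := by
  have := hμ.prob
  have i1 : Integrable (fun p : ℝ × ℝ => p.2 * g (p.1 + p.2)) ((sumLaw μ n).prod μ) :=
    (hμ.int1.comp_snd _).mul_bdd (Measurable.aestronglyMeasurable (by fun_prop)) (Eventually.of_forall fun p => hM _)
  have i2 : Integrable (fun p : ℝ × ℝ => p.2 * g p.1) ((sumLaw μ n).prod μ) :=
    (hμ.int1.comp_snd _).mul_bdd (Measurable.aestronglyMeasurable (by fun_prop)) (Eventually.of_forall fun p => hM _)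
  have e : (fun p : ℝ × ℝ => p.2 * (g (p.1 + p.2) - g p.1))
      = fun p => p.2 * g (p.1 + p.2) - p.2 * g p.1 := by funext p; ring
  have h0 : ∫ p, p.2 * g p.1 ∂((sumLaw μ n).prod μ) = 0 := by
    have := integral_prod_mul (μ := sumLaw μ n) (ν := μ) g fun x : ℝ => x
    rw [hμ.mean, mul_zero] at this
    rw [← this]; congr 1; funext p; ring
  rw [e]
  refine ⟨i1.sub i2, ?_⟩
  rw [integral_sub i1 i2, h0, sub_zero, sumLaw_exchange hμ n hg hM]

/-! ### Smoothing: anti-concentration and truncated exponential moments -/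

/-- A radius inside which the truncated second moment is at least `1/2`. -/
lemma exists_trunc {μ : Measure ℝ} (hμ : IsStandardized μ) :
    ∃ δ : ℝ, 0 < δ ∧ 1 / 2 ≤ ∫ x, (if |x| ≤ δ then x ^ 2 else 0) ∂μ := by
  have h := tendsto_setIntegral_of_monotone (μ := μ) (f := fun x : ℝ => x ^ 2)
    (s := fun k : ℕ => {x : ℝ | |x| ≤ k})
    (fun k => measurableSet_le (by fun_prop) (by fun_prop))
    (fun i j hij x (hx : |x| ≤ i) => hx.trans (by exact_mod_cast hij))
    (hμ.int2.integrableOn)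
  have hU : (⋃ k : ℕ, {x : ℝ | |x| ≤ k}) = univ := by
    refine eq_univ_of_forall fun x => ?_
    obtain ⟨k, hk⟩ := exists_nat_ge |x|
    exact mem_iUnion.2 ⟨k, hk⟩
  rw [hU, setIntegral_univ, hμ.var] at h
  obtain ⟨k, hk, hk1⟩ := ((h.eventually (lt_mem_nhds (by norm_num : (1 / 2 : ℝ) < 1))).and
    (eventually_ge_atTop 1)).exists
  refine ⟨k, by exact_mod_cast hk1, ?_⟩
  rw [← integral_indicator (measurableSet_le (by fun_prop) (by fun_prop))] at hk
  exact hk.le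

/-- The engine behind both anti-concentration bounds: if `f` is increasing and bounded by `M`,
and has increments at least those of slope `g w` in a `δ`-neighbourhood of `w`, then
`E[g(S)] = O(M / √n)`. This follows from `M √(n+1) ≥ E[S f(S)] = (n + 1) E[X (f(T + X) - f(T))]`,
the integrand on the right being nonnegative. -/
lemma sumLaw_smoothing {μ : Measure ℝ} (hμ : IsStandardized μ) {δ : ℝ}
    (hδ : 1 / 2 ≤ ∫ x, (if |x| ≤ δ then x ^ 2 else 0) ∂μ) (n : ℕ) {f g : ℝ → ℝ}
    (hf : Measurable f) {M : ℝ} (hM : ∀ s, |f s| ≤ M) (hmono : Monotone f)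
    (hg : Measurable g) {G : ℝ} (hg0 : ∀ s, 0 ≤ g s) (hG : ∀ s, g s ≤ G)
    (hfg : ∀ w x, |x| ≤ δ → x ^ 2 * g w ≤ x * (f (w + x) - f w)) :
    ∫ s, g s ∂(sumLaw μ n) ≤ 2 * M / Real.sqrt (n + 1) := by
  have := hμ.prob
  set r := Real.sqrt (n + 1) with hr
  have hr0 : 0 < r := Real.sqrt_pos.2 (by positivity)
  have hr2 : r ^ 2 = n + 1 := Real.sq_sqrt (by positivity)
  obtain ⟨i1, e1⟩ := sumLaw_exchange_sub hμ n hf hM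
  have hM0 : 0 ≤ M := (abs_nonneg _).trans (hM 0)
  have up : ∫ s, s * f s ∂(sumLaw μ (n + 1)) ≤ M * r := by
    have hi := (sumLaw_moments hμ (n + 1)).1
    calc ∫ s, s * f s ∂(sumLaw μ (n + 1)) ≤ ∫ s, M * |s| ∂(sumLaw μ (n + 1)) := by
          refine integral_mono (hi.mul_bdd hf.aestronglyMeasurable (Eventually.of_forall hM))
            (hi.abs.const_mul M) fun s => ?_
          refine (le_abs_self _).trans ?_
          rw [abs_mul, mul_comm]
          exact mul_le_mul_of_nonneg_right (hM s) (abs_nonneg s)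
      _ ≤ M * r := by
          rw [integral_const_mul]
          exact mul_le_mul_of_nonneg_left
            (sumLaw_abs_le hμ (n + 1) hr0 (by rw [hr2]; push_cast; rfl)) hM0
  have hgi : Integrable g (sumLaw μ n) :=
    integrable_of_abs_le hg fun s => by rw [abs_of_nonneg (hg0 s)]; exact hG s
  have hti : Integrable (fun x : ℝ => if |x| ≤ δ then x ^ 2 else 0) μ := by
    refine hμ.int2.mono' (Measurable.aestronglyMeasurable (Measurable.ite
      (measurableSet_le (by fun_prop) (by fun_prop)) (by fun_prop) (by fun_prop)))
      (Eventually.of_forall fun x => ?_)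
    split_ifs
    · rw [Real.norm_of_nonneg (sq_nonneg x)]
    · simpa using sq_nonneg x
  have low : (∫ s, g s ∂(sumLaw μ n)) * (1 / 2)
      ≤ ∫ p, p.2 * (f (p.1 + p.2) - f p.1) ∂((sumLaw μ n).prod μ) := by
    calc (∫ s, g s ∂(sumLaw μ n)) * (1 / 2)
        ≤ (∫ s, g s ∂(sumLaw μ n)) * ∫ x, (if |x| ≤ δ then x ^ 2 else 0) ∂μ :=
          mul_le_mul_of_nonneg_left hδ (integral_nonneg hg0)
      _ = ∫ p, g p.1 * (if |p.2| ≤ δ then p.2 ^ 2 else 0) ∂((sumLaw μ n).prod μ) :=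
          (integral_prod_mul (μ := sumLaw μ n) (ν := μ) g
            fun x : ℝ => if |x| ≤ δ then x ^ 2 else 0).symm
      _ ≤ _ := by
          refine integral_mono (hgi.mul_prod hti) i1 fun p => ?_
          simp only
          split_ifs with h
          · rw [mul_comm]; exact hfg _ _ h
          · rw [mul_zero]
            rcases le_total 0 p.2 with h0 | h0
            · exact mul_nonneg h0 (sub_nonneg.2 (hmono (by linarith)))
            · exact mul_nonneg_of_nonpos_of_nonpos h0 (sub_nonpos.2 (hmono (by linarith)))
  rw [e1, ← hr2] at up
  rw [le_div_iff₀ hr0]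
  have h3 : r ^ 2 * ((∫ s, g s ∂(sumLaw μ n)) * (1 / 2)) ≤ M * r :=
    (mul_le_mul_of_nonneg_left low (sq_nonneg r)).trans up
  have h4 : r * (r * ((∫ s, g s ∂(sumLaw μ n)) * (1 / 2))) ≤ r * M := by linarith
  have h5 := le_of_mul_le_mul_left h4 hr0
  linarith

/-- Short intervals have probability of order their length plus `1/√n`. -/
lemma sumLaw_concentration {μ : Measure ℝ} (hμ : IsStandardized μ) {δ : ℝ} (hδ0 : 0 < δ)
    (hδ : 1 / 2 ≤ ∫ x, (if |x| ≤ δ then x ^ 2 else 0) ∂μ) (n : ℕ) (u : ℝ) {h : ℝ} (hh : 0 ≤ h) :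
    ∫ s, (if |s - u| ≤ h then 1 else 0) ∂(sumLaw μ n) ≤ 2 * (h + δ) / Real.sqrt (n + 1) := by
  -- the identity centred at `u` and clipped at `± (h + δ)`
  refine sumLaw_smoothing hμ hδ n (f := fun s => max (-(h + δ)) (min (s - u) (h + δ)))
    (by fun_prop) (fun s => ?_) (fun a b hab => ?_)
    (Measurable.ite (measurableSet_le (by fun_prop) (by fun_prop)) (by fun_prop) (by fun_prop))
    (G := 1) (fun s => ?_) (fun s => ?_) (fun w x hx => ?_)
  · rw [abs_le]
    exact ⟨le_max_left _ _, max_le (by linarith) (min_le_right _ _)⟩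
  · exact max_le_max le_rfl (min_le_min (by linarith) le_rfl)
  · split_ifs <;> norm_num
  · split_ifs <;> norm_num
  · split_ifs with h1
    · have h2 := abs_le.1 hx
      have h3 := abs_le.1 h1
      rw [min_eq_left (by linarith), max_eq_right (by linarith), min_eq_left (by linarith),
        max_eq_right (by linarith)]
      apply le_of_eq; ring
    · rw [mul_zero]
      have hm : Monotone fun s => max (-(h + δ)) (min (s - u) (h + δ)) := by
        intro a b hab; simp only; gcongr
      rcases le_total 0 x with h0 | h0
      · exact mul_nonneg h0 (sub_nonneg.2 (hm (by linarith)))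
      · exact mul_nonneg_of_nonpos_of_nonpos h0 (sub_nonpos.2 (hm (by linarith)))

/-- The exponential moment truncated at `b` is of order `e^{σ b} / √n`: a factor `1/√n` smaller
than the trivial bound. -/
lemma sumLaw_exp_le {μ : Measure ℝ} (hμ : IsStandardized μ) {σ : ℝ} (hσ : 0 < σ) :
    ∃ C : ℝ, 0 < C ∧ ∀ (n : ℕ) (b : ℝ),
      ∫ s, (if s ≤ b then Real.exp (σ * s) else 0) ∂(sumLaw μ n)
        ≤ C * Real.exp (σ * b) / Real.sqrt (n + 1) := by
  have := hμ.prob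
  obtain ⟨δ, hδ0, hδ⟩ := exists_trunc hμ
  refine ⟨2 * Real.exp (2 * σ * δ) / σ, by positivity, fun n b => ?_⟩
  have hm : Monotone fun s => Real.exp (σ * min s (b + δ)) / σ := by
    intro x y hxy
    simp only
    gcongr
  have key := sumLaw_smoothing hμ hδ n (f := fun s => Real.exp (σ * min s (b + δ)) / σ)
    (g := fun s => Real.exp (-(σ * δ)) * (if s ≤ b then Real.exp (σ * s) else 0))
    (by fun_prop) (M := Real.exp (σ * (b + δ)) / σ) (fun s => ?_) hm
    (Measurable.const_mul (Measurable.ite measurableSet_Iic (by fun_prop) (by fun_prop)) _)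
    (G := Real.exp (-(σ * δ)) * Real.exp (σ * b)) (fun s => ?_) (fun s => ?_) (fun w x hx => ?_)
  · rw [integral_const_mul] at key
    have e1 : Real.exp (2 * σ * δ) * Real.exp (σ * b)
        = Real.exp (σ * δ) * Real.exp (σ * (b + δ)) := by
      rw [← Real.exp_add, ← Real.exp_add]; congr 1; ring
    have e2 : Real.exp (σ * δ) * Real.exp (-(σ * δ)) = 1 := by rw [← Real.exp_add]; simp
    calc _ = Real.exp (σ * δ) * (Real.exp (-(σ * δ))
            * ∫ s, (if s ≤ b then Real.exp (σ * s) else 0) ∂(sumLaw μ n)) := by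
          rw [← mul_assoc, e2, one_mul]
      _ ≤ Real.exp (σ * δ) * (2 * (Real.exp (σ * (b + δ)) / σ) / Real.sqrt (n + 1)) :=
          mul_le_mul_of_nonneg_left key (Real.exp_pos _).le
      _ = (2 * (Real.exp (σ * δ) * Real.exp (σ * (b + δ))) / σ) / Real.sqrt (n + 1) := by ring
      _ = _ := by rw [← e1]; ring
  · rw [abs_of_pos (by positivity)]
    gcongr
    exact min_le_right _ _
  · split_ifs <;> positivity
  · split_ifs with h
    · gcongr
    · rw [mul_zero]; positivity
  · split_ifs with h
    · have h2 := abs_le.1 hx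
      rw [min_eq_left (by linarith), min_eq_left (by linarith)]
      -- convexity of the exponential, from the left end of the interval between `w` and `w + x`
      have c1 : Real.exp (σ * w) * (1 + σ * x) ≤ Real.exp (σ * (w + x)) := by
        rw [mul_add σ w x, Real.exp_add]
        exact mul_le_mul_of_nonneg_left (by linarith [Real.add_one_le_exp (σ * x)])
          (Real.exp_pos _).le
      have c2 : Real.exp (σ * (w + x)) * (1 - σ * x) ≤ Real.exp (σ * w) := by
        have : Real.exp (σ * w) = Real.exp (σ * (w + x)) * Real.exp (-(σ * x)) := by
          rw [← Real.exp_add]; congr 1; ring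
        rw [this]
        exact mul_le_mul_of_nonneg_left (by linarith [Real.add_one_le_exp (-(σ * x))])
          (Real.exp_pos _).le
      have c3 : Real.exp (-(σ * δ)) * Real.exp (σ * w) ≤ Real.exp (σ * w) := by
        rw [← Real.exp_add]
        exact Real.exp_le_exp.2 (by nlinarith)
      have c4 : Real.exp (-(σ * δ)) * Real.exp (σ * w) ≤ Real.exp (σ * (w + x)) := by
        rw [← Real.exp_add]
        exact Real.exp_le_exp.2 (by nlinarith)
      rw [← sub_div, ← mul_div_assoc, le_div_iff₀ hσ]
      rcases le_total 0 x with h0 | h0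
      · have a1 : σ * x * (Real.exp (-(σ * δ)) * Real.exp (σ * w))
            ≤ σ * x * Real.exp (σ * w) := mul_le_mul_of_nonneg_left c3 (by positivity)
        nlinarith
      · have a1 : σ * (-x) * (Real.exp (-(σ * δ)) * Real.exp (σ * w))
            ≤ σ * (-x) * Real.exp (σ * (w + x)) :=
          mul_le_mul_of_nonneg_left c4 (mul_nonneg hσ.le (neg_nonneg.2 h0))
        nlinarith
    · rw [mul_zero, mul_zero]
      rcases le_total 0 x with h0 | h0
      · exact mul_nonneg h0 (sub_nonneg.2 (hm (by linarith)))
      · exact mul_nonneg_of_nonpos_of_nonpos h0 (sub_nonpos.2 (hm (by linarith)))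

/-! ### The Berry-Esseen bound -/

/-- Berry-Esseen, with a constant depending on the law `μ`, for sums of `n + 1` variables. -/
theorem berry_esseen {μ : Measure ℝ} (hμ : IsStandardized μ) :
    ∃ B : ℝ, 0 < B ∧ ∀ (n : ℕ) (z : ℝ),
      |(sumLaw μ (n + 1)).real (Iic (Real.sqrt (n + 1) * z)) - stdNormalCDF z|
        ≤ B / Real.sqrt (n + 1) := by
  have := hμ.prob
  obtain ⟨δ, hδ0, hδ⟩ := exists_trunc hμ
  have hC := steinConst_pos
  have j1 : Integrable (fun x : ℝ => (1 + x ^ 2) * |x|) μ := by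
    have e : (fun x : ℝ => (1 + x ^ 2) * |x|) = fun x => |x| + |x| ^ 3 := by
      funext x; rw [← sq_abs]; ring
    rw [e]; exact hμ.int1.abs.add hμ.int3
  have j2 : Integrable (fun x : ℝ => (1 + x ^ 2) * (|x| + δ)) μ := by
    have e : (fun x : ℝ => (1 + x ^ 2) * (|x| + δ))
        = fun x => (1 + x ^ 2) * |x| + (1 + x ^ 2) * δ := by funext x; ring
    rw [e]; exact j1.add (((integrable_const 1).add hμ.int2).mul_const δ)
  have j3 : Integrable (fun x : ℝ => 1 + x ^ 2) μ := (integrable_const 1).add hμ.int2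
  set β := ∫ x, (1 + x ^ 2) * |x| ∂μ with hβ
  set κ := ∫ x, (1 + x ^ 2) * (|x| + δ) ∂μ with hκ
  have hβ0 : 0 ≤ β := integral_nonneg fun x => by positivity
  have hκ0 : 0 ≤ κ := integral_nonneg fun x => by positivity
  refine ⟨β * (2 + steinConst) + 8 * κ + 1, by positivity, fun n z => ?_⟩
  set r := Real.sqrt (n + 1) with hr
  have hr0 : 0 < r := Real.sqrt_pos.2 (by positivity)
  have hr2 : r ^ 2 = n + 1 := Real.sq_sqrt (by positivity)
  set a := 1 / r with ha
  have ha0 : 0 < a := by positivity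
  have har : a * r = 1 := by rw [ha]; field_simp
  set N := (sumLaw μ n).prod μ with hN
  have hfm : Measurable (steinSol z) := (continuous_steinSol z).measurable
  have hDm := measurable_steinDeriv z
  -- Stein's equation turns the error into an expectation
  have hgm : Measurable fun s => steinSol z (a * s) := by fun_prop
  have hgb : ∀ s, |steinSol z (a * s)| ≤ steinConst := fun s => abs_steinSol_le z _
  have hDi : Integrable (fun s => steinDeriv z (a * s)) (sumLaw μ (n + 1)) :=
    integrable_of_abs_le (by fun_prop) fun s => abs_steinDeriv_le z _
  have hWi : Integrable (fun s => a * (s * steinSol z (a * s))) (sumLaw μ (n + 1)) := by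
    refine integrable_of_abs_le (by fun_prop) (M := 1) fun s => ?_
    rw [← mul_assoc]; exact abs_mul_steinSol_le z _
  have s1 : (sumLaw μ (n + 1)).real (Iic (r * z)) - stdNormalCDF z
      = (∫ s, steinDeriv z (a * s) ∂(sumLaw μ (n + 1)))
        - a * ∫ s, s * steinSol z (a * s) ∂(sumLaw μ (n + 1)) := by
    rw [← integral_const_mul, ← integral_sub hDi hWi]
    have e : (fun s => steinDeriv z (a * s) - a * (s * steinSol z (a * s)))
        = fun s => (Iic (r * z)).indicator 1 s - stdNormalCDF z := by
      funext s
      have hiff : a * s ≤ z ↔ s ≤ r * z := by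
        rw [ha, one_div, inv_mul_le_iff₀ hr0]
      unfold steinDeriv
      by_cases h : s ≤ r * z
      · rw [if_pos (hiff.2 h), indicator_of_mem (by exact h)]; simp only [Pi.one_apply]; ring
      · rw [if_neg (fun h' => h (hiff.1 h')), indicator_of_notMem (by exact h)]; ring
    have hind : Integrable ((Iic (r * z)).indicator (1 : ℝ → ℝ)) (sumLaw μ (n + 1)) :=
      (integrable_const (1 : ℝ)).indicator measurableSet_Iic
    rw [e, integral_sub hind (integrable_const _), integral_indicator_one measurableSet_Iic]
    simp
  obtain ⟨i1, s2⟩ := sumLaw_exchange_sub hμ n hgm hgb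
  have s3 : ∫ p, p.2 ^ 2 * steinDeriv z (a * p.1) ∂N = ∫ p, steinDeriv z (a * p.1) ∂N := by
    have h1 := integral_prod_mul (μ := sumLaw μ n) (ν := μ) (fun w => steinDeriv z (a * w))
      fun x : ℝ => x ^ 2
    have h2 := integral_fun_fst (μ := sumLaw μ n) (ν := μ) (fun w => steinDeriv z (a * w))
    rw [hμ.var, mul_one] at h1
    simp only [probReal_univ, one_smul] at h2
    rw [hN, h2, ← h1]
    congr 1; funext p; ring
  have k1 : Integrable (fun p : ℝ × ℝ => steinDeriv z (a * (p.1 + p.2))) N :=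
    integrable_of_abs_le (by fun_prop) fun s => abs_steinDeriv_le z _
  have k2 : Integrable (fun p : ℝ × ℝ => steinDeriv z (a * p.1)) N :=
    integrable_of_abs_le (by fun_prop) fun s => abs_steinDeriv_le z _
  have k3 : Integrable (fun p : ℝ × ℝ => p.2 ^ 2 * steinDeriv z (a * p.1)) N :=
    (hμ.int2.comp_snd _).mul_bdd (Measurable.aestronglyMeasurable (by fun_prop))
      (Eventually.of_forall fun p => abs_steinDeriv_le z _)
  -- the two error terms, gathered in a single integrand
  have s4 : (sumLaw μ (n + 1)).real (Iic (r * z)) - stdNormalCDF z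
      = ∫ p, ((steinDeriv z (a * (p.1 + p.2)) - steinDeriv z (a * p.1))
        - (r * (p.2 * (steinSol z (a * (p.1 + p.2)) - steinSol z (a * p.1)))
          - p.2 ^ 2 * steinDeriv z (a * p.1))) ∂N := by
    have t0 : ∫ p, ((steinDeriv z (a * (p.1 + p.2)) - steinDeriv z (a * p.1))
        - (r * (p.2 * (steinSol z (a * (p.1 + p.2)) - steinSol z (a * p.1)))
          - p.2 ^ 2 * steinDeriv z (a * p.1))) ∂N
        = ∫ p, (steinDeriv z (a * (p.1 + p.2)) - steinDeriv z (a * p.1)) ∂N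
        - ∫ p, (r * (p.2 * (steinSol z (a * (p.1 + p.2)) - steinSol z (a * p.1)))
          - p.2 ^ 2 * steinDeriv z (a * p.1)) ∂N :=
      integral_sub (k1.sub k2) ((i1.const_mul r).sub k3)
    rw [t0, integral_sub k1 k2, integral_sub (i1.const_mul r) k3, s3, s1, s2, integral_const_mul,
      integral_sumLaw_succ n (by fun_prop), ← hr2]
    have : a * (r ^ 2 * ∫ p, p.2 * (steinSol z (a * (p.1 + p.2)) - steinSol z (a * p.1)) ∂N)
        = (a * r) * (r * ∫ p, p.2 * (steinSol z (a * (p.1 + p.2)) - steinSol z (a * p.1)) ∂N) := by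
      ring
    rw [this, har]
    ring
  have b1 : Integrable (fun p : ℝ × ℝ => (2 * (a * |p.1|) + steinConst)
      * (a * ((1 + p.2 ^ 2) * |p.2|))) N :=
    ((((sumLaw_moments hμ n).1.abs.const_mul a).const_mul 2).add
      (integrable_const steinConst)).mul_prod (j1.const_mul a)
  have hset : MeasurableSet {p : ℝ × ℝ | |p.1 - r * z| ≤ |p.2|} :=
    measurableSet_le (by fun_prop) (by fun_prop)
  have b2 : Integrable (fun p : ℝ × ℝ => (1 + p.2 ^ 2)
      * (if |p.1 - r * z| ≤ |p.2| then (1 : ℝ) else 0)) N := by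
    refine (j3.comp_snd _).mul_bdd (c := 1) (Measurable.aestronglyMeasurable
      (Measurable.ite hset (by fun_prop) (by fun_prop)))
      (Eventually.of_forall fun p => ?_)
    split_ifs <;> simp
  have s5 : |(sumLaw μ (n + 1)).real (Iic (r * z)) - stdNormalCDF z|
      ≤ ∫ p, ((2 * (a * |p.1|) + steinConst) * (a * ((1 + p.2 ^ 2) * |p.2|))
        + 4 * ((1 + p.2 ^ 2) * (if |p.1 - r * z| ≤ |p.2| then (1 : ℝ) else 0))) ∂N := by
    rw [s4, ← Real.norm_eq_abs]
    refine norm_integral_le_of_norm_le (b1.add (b2.const_mul 4)) (Eventually.of_forall fun p => ?_)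
    obtain ⟨w, x⟩ := p
    simp only [Real.norm_eq_abs]
    have hiff : |a * w - z| ≤ |a * x| ↔ |w - r * z| ≤ |x| := by
      have : a * w - z = a * (w - r * z) := by
        rw [mul_sub, ← mul_assoc, har, one_mul]
      rw [this, abs_mul, abs_mul]
      exact mul_le_mul_iff_right₀ (abs_pos.2 ha0.ne')
    have t1 := steinDeriv_sub_le' z (a * w) (a * x)
    have t2 := steinSol_taylor z (a * w) (a * x)
    simp only [hiff] at t1 t2
    rw [← mul_add] at t1 t2
    have e3 : r * (x * (steinSol z (a * (w + x)) - steinSol z (a * w)))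
          - x ^ 2 * steinDeriv z (a * w)
        = (r * x) * (steinSol z (a * (w + x)) - steinSol z (a * w)
          - a * x * steinDeriv z (a * w)) := by
      linear_combination (x ^ 2 * steinDeriv z (a * w)) * har
    rw [e3]
    set I : ℝ := if |w - r * z| ≤ |x| then 1 else 0
    refine (abs_sub _ _).trans ?_
    rw [abs_mul (r * x), abs_mul r, abs_of_pos hr0]
    rw [abs_mul a x, abs_of_pos ha0, abs_mul a w, abs_of_pos ha0] at t1 t2
    have t3 := mul_le_mul_of_nonneg_left t2 (show 0 ≤ r * |x| by positivity)
    have e4 : r * |x| * (a * |x| * (a * |x| * (2 * (a * |w|) + steinConst) + 4 * I))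
        = x ^ 2 * (a * |x| * (2 * (a * |w|) + steinConst) + 4 * I) := by
      rw [← sq_abs x]
      linear_combination (|x| ^ 2 * (a * |x| * (2 * (a * |w|) + steinConst) + 4 * I)) * har
    rw [e4] at t3
    calc _ ≤ _ := add_le_add t1 t3
      _ = _ := by ring
  have s6 : ∫ p, (2 * (a * |p.1|) + steinConst) * (a * ((1 + p.2 ^ 2) * |p.2|)) ∂N
      ≤ (2 + steinConst) * (a * β) := by
    rw [hN, integral_prod_mul (μ := sumLaw μ n) (ν := μ) (fun w => 2 * (a * |w|) + steinConst)
      fun x : ℝ => a * ((1 + x ^ 2) * |x|), integral_const_mul]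
    refine mul_le_mul_of_nonneg_right ?_ (by positivity)
    rw [integral_add (((sumLaw_moments hμ n).1.abs.const_mul a).const_mul 2)
      (integrable_const _), integral_const_mul, integral_const_mul]
    have h1 := sumLaw_abs_le hμ n hr0 (by rw [hr2]; linarith)
    have h2 := mul_le_mul_of_nonneg_left h1 ha0.le
    rw [har] at h2
    simp only [integral_const, probReal_univ, one_smul]
    linarith
  have s7 : ∫ p, (1 + p.2 ^ 2) * (if |p.1 - r * z| ≤ |p.2| then (1 : ℝ) else 0) ∂N
      ≤ 2 * a * κ := by
    rw [hN, integral_prod_symm _ b2, hκ, ← integral_const_mul]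
    refine integral_mono b2.integral_prod_right (j2.const_mul _) fun x => ?_
    simp only
    rw [integral_const_mul]
    have h1 := sumLaw_concentration hμ hδ0 hδ n (r * z) (abs_nonneg x)
    have h2 := mul_le_mul_of_nonneg_left h1 (show 0 ≤ 1 + x ^ 2 by positivity)
    refine h2.trans (le_of_eq ?_)
    rw [← hr, ha]; ring
  rw [integral_add b1 (b2.const_mul 4), integral_const_mul] at s5
  calc _ ≤ _ := s5
    _ ≤ (2 + steinConst) * (a * β) + 4 * (2 * a * κ) := by linarith
    _ ≤ a * (β * (2 + steinConst) + 8 * κ + 1) := by linarith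
    _ = _ := by rw [ha]; ring

/-! ### Moving the threshold -/

/-- Increasing the threshold by `h ≤ 1` gains at least `h` times a constant in probability. -/
lemma stdNormalCDF_add_ge (r : ℝ) {h : ℝ} (h0 : 0 < h) (h1 : h ≤ 1) :
    stdNormalCDF r + h * stdNormalPDF (|r| + 1) ≤ stdNormalCDF (r + h) := by
  obtain ⟨ξ, hξ, e⟩ := exists_hasDerivAt_eq_slope stdNormalCDF stdNormalPDF
    (show r < r + h by linarith) continuous_stdNormalCDF.continuousOn
    fun x _ => hasDerivAt_stdNormalCDF x
  have hξ' : |ξ| ≤ |(|r| + 1)| := by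
    rw [abs_of_nonneg (a := |r| + 1) (by positivity), abs_le]
    have := abs_le.1 (le_refl |r|)
    constructor <;> linarith [hξ.1, hξ.2]
  have h2 := stdNormalPDF_anti hξ'
  rw [e, add_sub_cancel_left, le_div_iff₀ h0] at h2
  linarith

lemma injective_stdNormalCDF : Function.Injective stdNormalCDF :=
  (strictMono_of_hasDerivAt_pos hasDerivAt_stdNormalCDF stdNormalPDF_pos).injective

/-! ### The information sums of a memoryless source -/

section source
variable {𝒳 : Type*}

/-- The law of `y X` when `X` has distribution `P`. -/
noncomputable def srcLaw (P y : 𝒳 → ℝ) : Measure ℝ :=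
  Measure.sum fun x => ENNReal.ofReal (P x) • Measure.dirac (y x)

lemma lintegral_srcLaw (P y : 𝒳 → ℝ) (F : ℝ → ℝ≥0∞) :
    ∫⁻ s, F s ∂(srcLaw P y) = ∑' x, ENNReal.ofReal (P x) * F (y x) := by
  simp [srcLaw, lintegral_sum_measure]

lemma integrable_srcLaw {P y : 𝒳 → ℝ} (hP0 : ∀ x, 0 ≤ P x) {F : ℝ → ℝ} (hF : Measurable F)
    (hs : Summable fun x => P x * |F (y x)|) : Integrable F (srcLaw P y) := by
  refine ⟨hF.aestronglyMeasurable, ?_⟩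
  rw [hasFiniteIntegral_iff_norm, lintegral_srcLaw]
  simp_rw [← ENNReal.ofReal_mul (hP0 _), Real.norm_eq_abs]
  exact hs.tsum_ofReal_lt_top

lemma integral_srcLaw {P y : 𝒳 → ℝ} (hP0 : ∀ x, 0 ≤ P x) {F : ℝ → ℝ} (hF : Measurable F)
    (hs : Summable fun x => P x * |F (y x)|) :
    ∫ s, F s ∂(srcLaw P y) = ∑' x, P x * F (y x) := by
  have hi := integrable_srcLaw hP0 hF hs
  unfold srcLaw at hi ⊢
  rw [integral_sum_measure hi]
  simp [ENNReal.toReal_ofReal (hP0 _)]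

/-- Sums over words, weighted by the product distribution, are integrals against `sumLaw`. -/
lemma tsum_words {P : 𝒳 → ℝ} (hP0 : ∀ x, 0 ≤ P x) (y : 𝒳 → ℝ)
    [IsProbabilityMeasure (srcLaw P y)] (n : ℕ)
    {F : ℝ → ℝ≥0∞} (hF : Measurable F) :
    ∑' x : Fin n → 𝒳, ENNReal.ofReal (∏ i, P (x i)) * F (∑ i, y (x i))
      = ∫⁻ s, F s ∂(sumLaw (srcLaw P y) n) := by
  induction n generalizing F with
  | zero => simp [sumLaw]
  | succ n ih =>
    have hm : Measurable fun w => ∫⁻ t, F (w + t) ∂(srcLaw P y) :=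
      Measurable.lintegral_prod_right' (f := fun p : ℝ × ℝ => F (p.1 + p.2)) (by fun_prop)
    rw [sumLaw, Measure.lintegral_conv hF, ← ih hm,
      ← (Fin.consEquiv fun _ : Fin (n + 1) => 𝒳).tsum_eq, ENNReal.tsum_prod',
      ENNReal.tsum_comm]
    refine tsum_congr fun x => ?_
    rw [lintegral_srcLaw, ← ENNReal.tsum_mul_left]
    refine tsum_congr fun x0 => ?_
    simp only [Fin.consEquiv_apply, Fin.prod_univ_succ, Fin.sum_univ_succ, Fin.cons_zero,
      Fin.cons_succ]
    rw [ENNReal.ofReal_mul (hP0 _), add_comm]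
    ring

/-- The standardized information of a source with entropy `H` and varentropy `V`. -/
noncomputable def stdInfo (P : 𝒳 → ℝ) (H V : ℝ) (x : 𝒳) : ℝ :=
  (Real.log (1 / P x) - H) / Real.sqrt V

lemma isStandardized_srcLaw (P : 𝒳 → ℝ) (hP0 : ∀ x, 0 ≤ P x) (hP1 : ∑' x, P x = 1)
    (H V : ℝ)
    (hH : H = ∑' x, P x * Real.log (1 / P x))
    (hV : V = ∑' x, P x * (Real.log (1 / P x) - H) ^ 2)
    (hVpos : 0 < V)
    (hT : Summable fun x => P x * |Real.log (1 / P x) - H| ^ 3) :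
    IsStandardized (srcLaw P (stdInfo P H V)) := by
  have hPs : Summable P := by
    by_contra h
    rw [tsum_eq_zero_of_not_summable h] at hP1
    exact zero_ne_one hP1
  have hs := Real.sqrt_pos.2 hVpos
  have hss := Real.sq_sqrt hVpos.le
  have s1 : Summable fun x => P x * |Real.log (1 / P x) - H| := by
    refine Summable.of_nonneg_of_le (fun x => mul_nonneg (hP0 x) (abs_nonneg _)) (fun x => ?_)
      (hPs.add hT)
    have h := hP0 x
    set t := |Real.log (1 / P x) - H|
    have ht : 0 ≤ t := abs_nonneg _
    have : t ≤ 1 + t ^ 3 := by nlinarith [sq_nonneg (t - 1), mul_nonneg ht (sq_nonneg (t - 1))]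
    nlinarith
  have s1' : Summable fun x => P x * (Real.log (1 / P x) - H) := by
    refine Summable.of_abs (s1.congr fun x => ?_)
    rw [abs_mul, abs_of_nonneg (hP0 x)]
  have s2 : Summable fun x => P x * (Real.log (1 / P x) - H) ^ 2 := by
    by_contra h
    rw [tsum_eq_zero_of_not_summable h] at hV
    exact hVpos.ne' hV
  have hmean : ∑' x, P x * (Real.log (1 / P x) - H) = 0 := by
    have e : (fun x => P x * Real.log (1 / P x))
        = fun x => P x * (Real.log (1 / P x) - H) + P x * H := by funext x; ring
    rw [e, s1'.tsum_add (hPs.mul_right H), tsum_mul_right, hP1] at hH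
    linarith
  constructor
  · constructor
    have := lintegral_srcLaw P (stdInfo P H V) 1
    simp only [Pi.one_apply, mul_one, lintegral_one] at this
    rw [this, ← ENNReal.ofReal_tsum_of_nonneg hP0 hPs, hP1, ENNReal.ofReal_one]
  · refine integrable_srcLaw hP0 (by fun_prop) ((hT.div_const (Real.sqrt V ^ 3)).congr fun x => ?_)
    rw [abs_of_nonneg (by positivity : 0 ≤ |stdInfo P H V x| ^ 3), stdInfo, abs_div,
      abs_of_pos hs, div_pow, mul_div_assoc]
  · rw [integral_srcLaw (F := fun x => x) hP0 measurable_id' ((s1.div_const (Real.sqrt V)).congr fun x => ?_)]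
    · simp only [stdInfo, ← mul_div_assoc]
      rw [tsum_div_const, hmean, zero_div]
    · rw [stdInfo, abs_div, abs_of_pos hs, mul_div_assoc]
  · have e : ∀ x, P x * (stdInfo P H V x) ^ 2
        = P x * (Real.log (1 / P x) - H) ^ 2 / V := by
      intro x
      rw [stdInfo, div_pow, hss, mul_div_assoc]
    rw [integral_srcLaw hP0 (by fun_prop) ((s2.div_const V).congr fun x => ?_)]
    · simp only [e]
      rw [tsum_div_const, ← hV, div_self hVpos.ne']
    · rw [abs_of_nonneg (sq_nonneg _), e]

/-- The words of positive probability whose normalized information is at most `b`. -/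
def typicalWords (P y : 𝒳 → ℝ) (n : ℕ) (b : ℝ) : Set (Fin n → 𝒳) :=
  {x | 0 < ∏ i, P (x i) ∧ ∑ i, y (x i) ≤ b}

open Classical in
lemma tsum_atypical_le {P y : 𝒳 → ℝ} (hP0 : ∀ x, 0 ≤ P x)
    [IsProbabilityMeasure (srcLaw P y)] (n : ℕ) (b : ℝ) :
    ∑' x : Fin n → 𝒳, (if x ∈ typicalWords P y n b then 0 else ENNReal.ofReal (∏ i, P (x i)))
      ≤ ENNReal.ofReal (1 - (sumLaw (srcLaw P y) n).real (Iic b)) := by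
  have h1 : 1 - (sumLaw (srcLaw P y) n).real (Iic b) = (sumLaw (srcLaw P y) n).real (Ioi b) := by
    rw [← compl_Iic, probReal_compl_eq_one_sub measurableSet_Iic]
  rw [h1, ofReal_measureReal, ← lintegral_indicator_one measurableSet_Ioi,
    ← tsum_words hP0 y n (measurable_one.indicator measurableSet_Ioi)]
  refine ENNReal.tsum_le_tsum fun x => ?_
  split_ifs with h
  · exact zero_le
  · by_cases hb : ∑ i, y (x i) ≤ b
    · have h0 : ∏ i, P (x i) ≤ 0 := not_lt.1 fun hp => h ⟨hp, hb⟩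
      simp [ENNReal.ofReal_of_nonpos h0]
    · rw [indicator_of_mem (by exact not_le.1 hb)]
      simp

/-- Counting is integrating `exp ı = 1 / P` against `P`: the number of typical words is at most the
expectation of `exp(ı(Xⁿ)) = exp(n H + √V S)` on the event `S ≤ b`, where `S` is the normalized
information sum. -/
lemma encard_typicalWords_le {P : 𝒳 → ℝ} (hP0 : ∀ x, 0 ≤ P x) {H V : ℝ} (hVpos : 0 < V)
    [IsProbabilityMeasure (srcLaw P (stdInfo P H V))] (n : ℕ) (b : ℝ) :
    ((typicalWords P (stdInfo P H V) n b).encard : ℝ≥0∞)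
      ≤ ENNReal.ofReal (Real.exp (n * H) *
        ∫ s, (if s ≤ b then Real.exp (Real.sqrt V * s) else 0)
          ∂(sumLaw (srcLaw P (stdInfo P H V)) n)) := by
  have hs := Real.sqrt_pos.2 hVpos
  have hm : Measurable fun s => if s ≤ b then Real.exp (Real.sqrt V * s) else 0 :=
    Measurable.ite measurableSet_Iic (by fun_prop) (by fun_prop)
  have h0 : ∀ s, 0 ≤ if s ≤ b then Real.exp (Real.sqrt V * s) else 0 := by
    intro s; split_ifs <;> positivity
  have hi : Integrable (fun s => if s ≤ b then Real.exp (Real.sqrt V * s) else 0)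
      (sumLaw (srcLaw P (stdInfo P H V)) n) := by
    refine integrable_of_abs_le hm (M := Real.exp (Real.sqrt V * b)) fun s => ?_
    rw [abs_of_nonneg (h0 s)]
    split_ifs with h
    · gcongr
    · positivity
  rw [ENNReal.ofReal_mul (Real.exp_pos _).le, ofReal_integral_eq_lintegral_ofReal hi
    (Eventually.of_forall h0), ← tsum_words hP0 _ n hm.ennreal_ofReal, ← ENNReal.tsum_mul_left,
    ← ENNReal.tsum_set_one, tsum_subtype (typicalWords P (stdInfo P H V) n b) fun _ => (1 : ℝ≥0∞)]
  refine ENNReal.tsum_le_tsum fun x => ?_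
  by_cases hx : x ∈ typicalWords P (stdInfo P H V) n b
  · rw [indicator_of_mem hx, if_pos hx.2, ← ENNReal.ofReal_mul hx.1.le,
      ← ENNReal.ofReal_mul (Real.exp_pos _).le]
    refine le_of_eq ?_
    rw [← ENNReal.ofReal_one]
    congr 1
    have e1 : Real.sqrt V * ∑ i, stdInfo P H V (x i)
        = -Real.log (∏ i, P (x i)) - n * H := by
      rw [Real.log_prod fun i hi => (Finset.prod_ne_zero_iff.1 hx.1.ne') i hi, Finset.mul_sum,
        ← Finset.sum_neg_distrib]
      have : ∀ i, Real.sqrt V * stdInfo P H V (x i) = -Real.log (P (x i)) - H := by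
        intro i
        rw [stdInfo, mul_div_cancel₀ _ hs.ne', one_div, Real.log_inv]
      simp only [this, Finset.sum_sub_distrib]
      simp
    rw [e1, Real.exp_sub, Real.exp_neg, Real.exp_log hx.1]
    have := hx.1.ne'
    have := (Real.exp_pos (n * H)).ne'
    field_simp
  · rw [indicator_of_notMem hx]; exact zero_le

/-- A finite nonempty set `S` of words whose complement has probability at most `ε` gives a code
of size `|S|`: enumerate `S`, and decode each codeword to the word it enumerates. -/
lemma exists_code [DecidableEq 𝒳] {P : 𝒳 → ℝ} (hP0 : ∀ x, 0 ≤ P x) {n : ℕ} {ε : ℝ} (hε : 0 ≤ ε)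
    (S : Set (Fin n → 𝒳)) [DecidablePred (· ∈ S)] (hS : S.Finite) (hne : S.Nonempty)
    (herr : ∑' x : Fin n → 𝒳, (if x ∈ S then 0 else ENNReal.ofReal (∏ i, P (x i)))
      ≤ ENNReal.ofReal ε) :
    S.ncard ∈ {M : ℕ | 0 < M ∧ ∃ f : (Fin n → 𝒳) → Fin M, ∃ g : Fin M → (Fin n → 𝒳),
      (∑' x : Fin n → 𝒳, if g (f x) = x then (0 : ℝ) else ∏ i, P (x i)) ≤ ε} := by
  have hpos : 0 < S.ncard := (ncard_pos hS).2 hne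
  have := hS.to_subtype
  let e : S ≃ Fin S.ncard := Finite.equivFinOfCardEq (Nat.card_coe_set_eq S)
  let f : (Fin n → 𝒳) → Fin S.ncard := fun x => if h : x ∈ S then e ⟨x, h⟩ else ⟨0, hpos⟩
  let g : Fin S.ncard → (Fin n → 𝒳) := fun j => (e.symm j : Fin n → 𝒳)
  have hfg : ∀ x ∈ S, g (f x) = x := by
    intro x hx
    simp [f, g, hx]
  have hpr : ∀ x : Fin n → 𝒳, 0 ≤ ∏ i, P (x i) := fun x => Finset.prod_nonneg fun i _ => hP0 _
  refine ⟨hpos, f, g, ?_⟩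
  have e1 : (∑' x : Fin n → 𝒳, if g (f x) = x then (0 : ℝ) else ∏ i, P (x i))
      = (∑' x : Fin n → 𝒳, ENNReal.ofReal (if g (f x) = x then (0 : ℝ) else ∏ i, P (x i))).toReal := by
    rw [ENNReal.tsum_toReal_eq fun _ => ENNReal.ofReal_ne_top]
    refine tsum_congr fun x => (ENNReal.toReal_ofReal ?_).symm
    split_ifs
    · exact le_rfl
    · exact hpr x
  rw [e1]
  refine ENNReal.toReal_le_of_le_ofReal hε (le_trans (ENNReal.tsum_le_tsum fun x => ?_) herr)
  by_cases hx : x ∈ S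
  · simp [hfg x hx]
  · rw [if_neg hx]
    refine ENNReal.ofReal_le_ofReal ?_
    split_ifs
    · exact hpr x
    · exact le_rfl

end source

end helpers

open MeasureTheory Set in
open scoped ENNReal in
/-- **Third-order-optimal achievability via random coding.**
For a stationary memoryless source with `V(X) > 0` and `T(X) < ∞` and `ε ∈ (0,1)`,
there are `K > 0` and `n₀` such that for all `n ≥ n₀`,
`(1/n)·log M*(n,ε) ≤ H(X) + √(V(X)/n)·Q⁻¹(ε) − (log n)/(2n) + K/n`,
where `M*(n,ε)` is the least code size of an `(n,M,ε)` code and `Q⁻¹(ε)` is the unique `r`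
with `1 − Φ(r) = ε`. -/
theorem third_order_achievability {𝒳 : Type*} [Countable 𝒳] [DecidableEq 𝒳]
    (P : 𝒳 → ℝ) (hP0 : ∀ x, 0 ≤ P x) (hP1 : ∑' x, P x = 1)
    (H V : ℝ)
    (hH : H = ∑' x, P x * Real.log (1 / P x))
    (hV : V = ∑' x, P x * (Real.log (1 / P x) - H) ^ 2)
    (hVpos : 0 < V)
    (hT : Summable fun x => P x * |Real.log (1 / P x) - H| ^ 3)
    (ε : ℝ) (hε : ε ∈ Set.Ioo (0 : ℝ) 1) :
    ∃ K : ℝ, 0 < K ∧ ∃ n₀ : ℕ, ∀ n : ℕ, n₀ ≤ n →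
      ∀ r : ℝ, 1 - stdNormalCDF r = ε →
        Real.log ((sInf {M : ℕ | 0 < M ∧
              ∃ f : (Fin n → 𝒳) → Fin M, ∃ g : Fin M → (Fin n → 𝒳),
                (∑' x : Fin n → 𝒳, if g (f x) = x then (0 : ℝ) else ∏ i, P (x i)) ≤ ε}
            : ℕ) : ℝ) / (n : ℝ)
          ≤ H + Real.sqrt (V / (n : ℝ)) * r - Real.log (n : ℝ) / (2 * (n : ℝ))
            + K / (n : ℝ) := by
  classical
  by_cases hr : ∃ r, 1 - stdNormalCDF r = ε
  swap
  · exact ⟨1, one_pos, 0, fun n _ r h => absurd ⟨r, h⟩ hr⟩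
  obtain ⟨r, hr⟩ := hr
  have hμ := isStandardized_srcLaw P hP0 hP1 H V hH hV hVpos hT
  have := hμ.prob
  have hs := Real.sqrt_pos.2 hVpos
  obtain ⟨B, hB, hBE⟩ := berry_esseen hμ
  obtain ⟨C, hC, hexp⟩ := sumLaw_exp_le hμ hs
  set y := stdInfo P H V with hy
  set c := stdNormalPDF (|r| + 1) with hc
  have hc0 : 0 < c := stdNormalPDF_pos _
  refine ⟨|Real.log C| + Real.sqrt V * (B / c) + 1, by positivity, ⌈(B / c) ^ 2⌉₊ + 1, ?_⟩
  intro n hn r' hr'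
  obtain rfl : r' = r := injective_stdNormalCDF (by linarith)
  have hn1 : 1 ≤ n := by omega
  have hn0 : (0 : ℝ) < n := by exact_mod_cast hn1
  have hnB : (B / c) ^ 2 ≤ n := by
    refine (Nat.le_ceil _).trans ?_
    exact_mod_cast (by omega : ⌈(B / c) ^ 2⌉₊ ≤ n)
  set q := Real.sqrt n with hq
  have hq0 : 0 < q := Real.sqrt_pos.2 hn0
  have hq2 : q * q = n := Real.mul_self_sqrt hn0.le
  -- the shift of the threshold that absorbs the Berry-Esseen error
  set h := B / c / q with hh
  have hh0 : 0 < h := by positivity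
  have hh1 : h ≤ 1 := by
    rw [hh, div_le_one hq0]
    exact Real.le_sqrt_of_sq_le hnB
  set b := q * (r' + h) with hb
  have hb' : b = q * r' + B / c := by rw [hb, hh]; field_simp
  have hcdf : 1 - ε ≤ (sumLaw (srcLaw P y) n).real (Iic b) := by
    obtain ⟨m, rfl⟩ : ∃ m, n = m + 1 := ⟨n - 1, by omega⟩
    have h1 := hBE m (r' + h)
    have e : Real.sqrt ((m : ℝ) + 1) = q := by rw [hq]; push_cast; rfl
    rw [e, ← hb] at h1
    have h2 := stdNormalCDF_add_ge r' hh0 hh1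
    have h3 : h * c = B / q := by rw [hh]; field_simp
    rw [← hc, h3] at h2
    have h4 := (abs_le.1 h1).1
    linarith
  set S := typicalWords P y n b with hS
  have herr : ∑' x : Fin n → 𝒳, (if x ∈ S then 0 else ENNReal.ofReal (∏ i, P (x i)))
      ≤ ENNReal.ofReal ε :=
    (tsum_atypical_le hP0 n b).trans (ENNReal.ofReal_le_ofReal (by linarith))
  set L := C * Real.exp (n * H + Real.sqrt V * b) / q with hL
  have hL0 : 0 < L := by positivity
  have hcard : (S.encard : ℝ≥0∞) ≤ ENNReal.ofReal L := by
    refine (encard_typicalWords_le hP0 hVpos n b).trans (ENNReal.ofReal_le_ofReal ?_)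
    calc _ ≤ Real.exp (n * H) * (C * Real.exp (Real.sqrt V * b) / Real.sqrt (n + 1)) :=
          mul_le_mul_of_nonneg_left (hexp n b) (Real.exp_pos _).le
      _ ≤ Real.exp (n * H) * (C * Real.exp (Real.sqrt V * b) / q) := by
          gcongr
          exact Real.sqrt_le_sqrt (by linarith)
      _ = L := by rw [hL, Real.exp_add]; ring
  have hfin : S.Finite := by
    rw [← Set.encard_ne_top_iff]
    intro htop
    rw [htop] at hcard
    exact absurd hcard (by simp)
  have hcard' : (S.ncard : ℝ) ≤ L := by
    rw [← hfin.cast_ncard_eq] at hcard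
    simpa using ENNReal.toReal_le_of_le_ofReal hL0.le hcard
  have hne : S.Nonempty := by
    rw [Set.nonempty_iff_ne_empty]
    intro hemp
    have h1 := tsum_words hP0 y n (F := 1) measurable_one
    rw [hemp] at herr
    simp only [mem_empty_iff_false, if_false] at herr
    simp only [Pi.one_apply, mul_one, lintegral_one, measure_univ] at h1
    rw [h1, ← ENNReal.ofReal_one, ENNReal.ofReal_le_ofReal_iff hε.1.le] at herr
    linarith [hε.2]
  have hmem := exists_code hP0 hε.1.le S hfin hne herr
  have hle := Nat.sInf_le hmem
  have hpos := (Nat.sInf_mem ⟨_, hmem⟩).1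
  have hlog : Real.log ((sInf {M : ℕ | 0 < M ∧
              ∃ f : (Fin n → 𝒳) → Fin M, ∃ g : Fin M → (Fin n → 𝒳),
                (∑' x : Fin n → 𝒳, if g (f x) = x then (0 : ℝ) else ∏ i, P (x i)) ≤ ε}
            : ℕ) : ℝ) ≤ Real.log L :=
    Real.log_le_log (by exact_mod_cast hpos) (le_trans (by exact_mod_cast hle) hcard')
  have hlogL : Real.log L = Real.log C + (n * H + Real.sqrt V * b) - Real.log n / 2 := by
    rw [hL, Real.log_div (by positivity) hq0.ne', Real.log_mul hC.ne' (Real.exp_pos _).ne',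
      Real.log_exp, hq, Real.log_sqrt hn0.le]
  have hsV : Real.sqrt (V / n) * n = Real.sqrt V * q := by
    rw [Real.sqrt_div hVpos.le, ← hq, ← hq2]; field_simp
  have e : H + Real.sqrt (V / (n : ℝ)) * r' - Real.log (n : ℝ) / (2 * (n : ℝ))
            + (|Real.log C| + Real.sqrt V * (B / c) + 1) / (n : ℝ)
      = (n * H + (Real.sqrt (V / n) * n) * r' - Real.log n / 2
            + (|Real.log C| + Real.sqrt V * (B / c) + 1)) / n := by
    field_simp
  rw [e, hsV]
  refine div_le_div_of_nonneg_right ?_ hn0.le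
  rw [hb'] at hlogL
  have := le_abs_self (Real.log C)
  linarith
end

section
/- Variational characterization of the minimal testing error: Let P be a probability distribution and Q₁,…,Q_k measures on a countable alphabet 𝒳, each assigning finite mass to every singleton. For β₁,…,β_k ≥ 0 define ε*(β₁,…,β_k) := inf{ ε ∈ [0,1] : there exists a randomized test t with P[Z=1] ≥ 1−ε and Q_j[Z=1] ≤ β_j for all j }. Then ε*(β₁,…,β_k) = sup over γ₁,…,γ_k ≥ 0 of ( Σ_{x ∈ 𝒳} min{ P(x), Σ_{j=1}^k γ_j·Q_j(x) } − Σ_{j=1}^k γ_j·β_j ). -/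
/-!
The statement is strong duality for a linear program over tests `t : 𝒳 → [0,1]`.

Weak duality (`dual_le_primal`) is the pointwise bound `min (P x) (∑ γⱼ Qⱼ x) ≤
P x (1 - t x) + (∑ γⱼ Qⱼ x) t x`, summed over `x`.

For the converse, consider the set `achievable P Q ⊆ ℝ × ℝᵏ` of pairs `(v, r)` such that some test
has `P[Z=1] ≥ v` and `Qⱼ[Z=1] ≤ rⱼ` for all `j`. It is convex, and it is closed because the space of
tests `[0,1]^𝒳` is compact, `t ↦ ∑ P t` is continuous (dominated by `P`) and `t ↦ ∑ Qⱼ t` is lower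
semicontinuous. If the error `d` is not achievable at level `β`, Hahn–Banach strictly separates
`(1 - d, β)` from this set. Closedness under increasing `r`, together with `(0, β)` being achievable,
forces the separating functional to be a positive multiple of `(v, r) ↦ v - ∑ γⱼ rⱼ` with `γ ≥ 0`;
evaluating it at the finitely supported tests `1[x ∈ F, P x > ∑ γⱼ Qⱼ x]` shows that the dual
value of `γ` is at least `d`.
-/

/-- The pairs `(v, r)` for which some randomized test has `P[Z=1] ≥ v` and `Qⱼ[Z=1] ≤ rⱼ`.
The bounds on the nonnegative series `∑ Qⱼ t` are stated through finite partial sums, which makes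
them visibly closed conditions on `t`. -/
def achievable {𝒳 : Type*} {k : ℕ} (P : 𝒳 → ℝ) (Q : Fin k → 𝒳 → ℝ) : Set (ℝ × (Fin k → ℝ)) :=
  {p | ∃ t : 𝒳 → Set.Icc (0 : ℝ) 1, p.1 ≤ ∑' x, P x * (t x : ℝ) ∧
    ∀ j, ∀ F : Finset 𝒳, ∑ x ∈ F, Q j x * (t x : ℝ) ≤ p.2 j}

lemma summable_mul_test {𝒳 : Type*} {P : 𝒳 → ℝ} (hP0 : ∀ x, 0 ≤ P x) (hP : Summable P)
    {t : 𝒳 → ℝ} (ht : ∀ x, t x ∈ Set.Icc (0 : ℝ) 1) : Summable (fun x => P x * t x) :=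
  Summable.of_nonneg_of_le (fun x => mul_nonneg (hP0 x) (ht x).1)
    (fun x => mul_le_of_le_one_right (hP0 x) (ht x).2) hP

lemma isClosed_achievable {𝒳 : Type*} {k : ℕ} {P : 𝒳 → ℝ} (hP0 : ∀ x, 0 ≤ P x)
    (hP : Summable P) (Q : Fin k → 𝒳 → ℝ) : IsClosed (achievable P Q) := by
  have hcl : IsClosed {q : (𝒳 → Set.Icc (0 : ℝ) 1) × (ℝ × (Fin k → ℝ)) |
      q.2.1 ≤ ∑' x, P x * (q.1 x : ℝ) ∧
      ∀ j, ∀ F : Finset 𝒳, ∑ x ∈ F, Q j x * (q.1 x : ℝ) ≤ q.2.2 j} := by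
    have hcont : Continuous (fun q : (𝒳 → Set.Icc (0 : ℝ) 1) × (ℝ × (Fin k → ℝ)) =>
        ∑' x, P x * (q.1 x : ℝ)) := by
      refine continuous_tsum (fun x => by fun_prop) hP (fun x q => ?_)
      rw [Real.norm_eq_abs, abs_of_nonneg (mul_nonneg (hP0 x) (q.1 x).2.1)]
      exact mul_le_of_le_one_right (hP0 x) (q.1 x).2.2
    rw [Set.ofPred_and]
    refine IsClosed.inter (isClosed_le (by fun_prop) hcont) ?_
    simp only [Set.ofPred_forall]
    exact isClosed_iInter fun j => isClosed_iInter fun F =>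
      isClosed_le (by fun_prop) (by fun_prop)
  convert isClosedMap_snd_of_compactSpace _ hcl using 1
  ext p
  constructor
  · rintro ⟨t, ht⟩
    exact ⟨(t, p), ht, rfl⟩
  · rintro ⟨⟨t, p'⟩, ht, rfl⟩
    exact ⟨t, ht⟩

lemma convex_achievable {𝒳 : Type*} {k : ℕ} {P : 𝒳 → ℝ} (hP0 : ∀ x, 0 ≤ P x)
    (hP : Summable P) (Q : Fin k → 𝒳 → ℝ) : Convex ℝ (achievable P Q) := by
  rintro p ⟨t, ht, ht'⟩ q ⟨s, hs, hs'⟩ a b ha hb hab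
  refine ⟨fun x => ⟨a * t x + b * s x,
    convex_Icc (0 : ℝ) 1 (t x).2 (s x).2 ha hb hab⟩, ?_, fun j F => ?_⟩
  · have h1 := (summable_mul_test hP0 hP (fun x => (t x).2)).mul_left a
    have h2 := (summable_mul_test hP0 hP (fun x => (s x).2)).mul_left b
    have : ∑' x, P x * (a * (t x : ℝ) + b * s x)
        = a * ∑' x, P x * (t x : ℝ) + b * ∑' x, P x * (s x : ℝ) := by
      rw [← tsum_mul_left, ← tsum_mul_left, ← h1.tsum_add h2]
      exact tsum_congr fun x => by ring
    simp only [this, Prod.fst_add, Prod.smul_fst, smul_eq_mul]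
    gcongr
  · have : ∑ x ∈ F, Q j x * (a * (t x : ℝ) + b * s x)
        = a * ∑ x ∈ F, Q j x * (t x : ℝ) + b * ∑ x ∈ F, Q j x * (s x : ℝ) := by
      rw [Finset.mul_sum, Finset.mul_sum, ← Finset.sum_add_distrib]
      exact Finset.sum_congr rfl fun x _ => by ring
    simp only [this, Prod.snd_add, Prod.smul_snd, Pi.add_apply, Pi.smul_apply, smul_eq_mul]
    have := ht' j F
    have := hs' j F
    gcongr

lemma summable_min {𝒳 : Type*} {P R : 𝒳 → ℝ} (hP0 : ∀ x, 0 ≤ P x) (hP : Summable P)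
    (hR : ∀ x, 0 ≤ R x) : Summable (fun x => min (P x) (R x)) :=
  Summable.of_nonneg_of_le (fun x => le_min (hP0 x) (hR x)) (fun _ => min_le_left _ _) hP

/-- Weak duality. -/
lemma dual_le_primal {𝒳 : Type*} {k : ℕ} {P : 𝒳 → ℝ} (hP0 : ∀ x, 0 ≤ P x)
    (hP : Summable P) (hP1 : ∑' x, P x = 1) {Q : Fin k → 𝒳 → ℝ} (hQ0 : ∀ j x, 0 ≤ Q j x)
    {β γ : Fin k → ℝ} (hγ : ∀ j, 0 ≤ γ j) {t : 𝒳 → ℝ} (ht : ∀ x, t x ∈ Set.Icc (0 : ℝ) 1)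
    {e : ℝ} (he : 1 - e ≤ ∑' x, P x * t x)
    (hQ : ∀ j, Summable (fun x => Q j x * t x) ∧ (∑' x, Q j x * t x) ≤ β j) :
    (∑' x, min (P x) (∑ j, γ j * Q j x)) - ∑ j, γ j * β j ≤ e := by
  have hR : ∀ x, 0 ≤ ∑ j, γ j * Q j x :=
    fun x => Finset.sum_nonneg fun j _ => mul_nonneg (hγ j) (hQ0 j x)
  have hPt := summable_mul_test hP0 hP ht
  have hQs : ∀ j ∈ Finset.univ, Summable (fun x => γ j * (Q j x * t x)) :=
    fun j _ => (hQ j).1.mul_left _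
  have hle : ∑' x, min (P x) (∑ j, γ j * Q j x)
      ≤ ∑' x, ((P x - P x * t x) + ∑ j, γ j * (Q j x * t x)) := by
    refine (summable_min hP0 hP hR).tsum_le_tsum (fun x => ?_)
      ((hP.sub hPt).add (summable_sum hQs))
    have h1 : ∑ j, γ j * (Q j x * t x) = (∑ j, γ j * Q j x) * t x := by
      rw [Finset.sum_mul]
      exact Finset.sum_congr rfl fun j _ => by ring
    rw [h1]
    nlinarith [min_le_left (P x) (∑ j, γ j * Q j x), min_le_right (P x) (∑ j, γ j * Q j x),
      (ht x).1, (ht x).2]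
  rw [(hP.sub hPt).tsum_add (summable_sum hQs), hP.tsum_sub hPt, hP1,
    Summable.tsum_finsetSum hQs] at hle
  have h2 : ∑ j, ∑' x, γ j * (Q j x * t x) ≤ ∑ j, γ j * β j := by
    refine Finset.sum_le_sum fun j _ => ?_
    rw [tsum_mul_left]
    exact mul_le_mul_of_nonneg_left (hQ j).2 (hγ j)
  linarith

/-- Strong duality: a point `(v, β)` with `v > 0` outside the achievable set is excluded by a
dual vector `γ`. -/
lemma exists_dual_of_not_achievable {𝒳 : Type*} {k : ℕ} {P : 𝒳 → ℝ} (hP0 : ∀ x, 0 ≤ P x)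
    (hP : Summable P) (hP1 : ∑' x, P x = 1) {Q : Fin k → 𝒳 → ℝ} (hQ0 : ∀ j x, 0 ≤ Q j x)
    {β : Fin k → ℝ} (hβ : ∀ j, 0 ≤ β j) {v : ℝ} (hv : 0 < v)
    (hA : (v, β) ∉ achievable P Q) :
    ∃ γ : Fin k → ℝ, (∀ j, 0 ≤ γ j) ∧
      1 - v ≤ (∑' x, min (P x) (∑ j, γ j * Q j x)) - ∑ j, γ j * β j := by
  classical
  obtain ⟨f, u, hfu, huf⟩ := geometric_hahn_banach_closed_point
    (convex_achievable hP0 hP Q) (isClosed_achievable hP0 hP Q) hA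
  set c := f (1, 0) with hc
  set g : Fin k → ℝ := fun j => f (0, Pi.single j 1) with hg
  have hf : ∀ a r, f (a, r) = c * a + ∑ j, g j * r j := by
    intro a r
    have h1 : ((a, r) : ℝ × (Fin k → ℝ))
        = a • ((1 : ℝ), (0 : Fin k → ℝ)) + ∑ j, r j • ((0 : ℝ), Pi.single j (1 : ℝ)) := by
      refine Prod.ext ?_ ?_
      · simp [Prod.fst_sum]
      · ext i
        simp [Prod.snd_sum, Finset.sum_apply, Pi.single_apply]
    rw [h1, map_add, map_smul, map_sum]
    simp only [map_smul, smul_eq_mul, hc, hg]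
    rw [mul_comm]
    exact congrArg _ (Finset.sum_congr rfl fun j _ => mul_comm _ _)
  have hzero : ∀ r : Fin k → ℝ, (∀ j, 0 ≤ r j) → ((0 : ℝ), r) ∈ achievable P Q := by
    intro r hr
    exact ⟨fun _ => 0, by simp, fun j F => by simpa using hr j⟩
  have hcpos : 0 < c := by
    have h := (hfu _ (hzero β hβ)).trans huf
    rw [hf, hf] at h
    by_contra hneg
    nlinarith
  -- A positive coefficient would let `f` grow without bound along the ray `(0, n eⱼ)`.
  have hgneg : ∀ j, g j ≤ 0 := by
    intro j
    by_contra! hpos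
    have hn : ∀ n : ℝ, 0 ≤ n → g j * n < u := by
      intro n hn
      have h := hfu _ (hzero (Pi.single j n) (fun i => by
        by_cases hij : i = j
        · subst hij; simpa using hn
        · simp [hij]))
      rw [hf] at h
      simpa [Pi.single_apply] using h
    have h0 : 0 < u := by simpa using hn 0 le_rfl
    have h1 := hn (u / g j) (by positivity)
    rw [mul_div_cancel₀ _ hpos.ne'] at h1
    exact lt_irrefl _ h1
  refine ⟨fun j => -g j / c, fun j => div_nonneg (neg_nonneg.2 (hgneg j)) hcpos.le, ?_⟩
  set γ : Fin k → ℝ := fun j => -g j / c with hγdef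
  have hγ0 : ∀ j, 0 ≤ γ j := fun j => div_nonneg (neg_nonneg.2 (hgneg j)) hcpos.le
  have hgγ : ∀ j, g j = -(c * γ j) := fun j => by
    simp only [hγdef]; field_simp
  have hR : ∀ x, 0 ≤ ∑ j, γ j * Q j x :=
    fun x => Finset.sum_nonneg fun j _ => mul_nonneg (hγ0 j) (hQ0 j x)
  have hf' : ∀ a r, f (a, r) = c * (a - ∑ j, γ j * r j) := by
    intro a r
    rw [hf, mul_sub, Finset.mul_sum, sub_eq_add_neg, ← Finset.sum_neg_distrib]
    exact congrArg _ (Finset.sum_congr rfl fun j _ => by rw [hgγ]; ring)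
  have hfin : ∀ F : Finset 𝒳,
      ∑ x ∈ F, (P x - min (P x) (∑ j, γ j * Q j x)) ≤ v - ∑ j, γ j * β j := by
    intro F
    -- The likelihood-ratio test truncated to `F`.
    set G : Finset 𝒳 := F.filter (fun x => ∑ j, γ j * Q j x < P x) with hG
    have hmem : ((∑ x ∈ G, P x, fun j => ∑ x ∈ G, Q j x) : ℝ × (Fin k → ℝ))
        ∈ achievable P Q := by
      refine ⟨fun x => if x ∈ G then 1 else 0, ?_, fun j F' => ?_⟩
      · rw [tsum_eq_sum (s := G) (fun x hx => by simp [hx])]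
        exact Finset.sum_le_sum fun x hx => by simp [hx]
      · have h1 : ∀ x, Q j x * (((if x ∈ G then 1 else 0 : Set.Icc (0 : ℝ) 1)) : ℝ)
            = if x ∈ G then Q j x else 0 := by
          intro x; split_ifs <;> simp
        simp only [h1]
        rw [← Finset.sum_filter]
        exact Finset.sum_le_sum_of_subset_of_nonneg
          (fun x hx => (Finset.mem_filter.1 hx).2) (fun x _ _ => hQ0 j x)
    have h := (hfu _ hmem).trans huf
    rw [hf', hf'] at h
    have h2 := lt_of_mul_lt_mul_left h hcpos.le
    refine le_trans (le_of_eq ?_) h2.le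
    have h3 : ∑ j, γ j * ∑ x ∈ G, Q j x = ∑ x ∈ G, ∑ j, γ j * Q j x := by
      rw [Finset.sum_comm]
      exact Finset.sum_congr rfl fun j _ => Finset.mul_sum _ _ _
    rw [h3, ← Finset.sum_sub_distrib, hG, Finset.sum_filter]
    refine Finset.sum_congr rfl fun x _ => ?_
    split_ifs with hx
    · rw [min_eq_right hx.le]
    · rw [min_eq_left (not_lt.1 hx), sub_self]
  have hmin := summable_min hP0 hP hR
  have h := (hP.sub hmin).tsum_le_of_sum_le hfin
  rw [hP.tsum_sub hmin, hP1] at h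
  linarith


/-- **Variational characterization of the minimal composite hypothesis testing error.**
For `β₁,…,β_k ≥ 0`,
`ε*(β) := inf{ε ∈ [0,1] : ∃ test t with P[Z=1] ≥ 1−ε and Q_j[Z=1] ≤ β_j ∀j}`
equals `sup_{γ ≥ 0} ( Σ_x min{P(x), Σ_j γ_j Q_j(x)} − Σ_j γ_j β_j )`. -/
theorem cht_variational_eps {𝒳 : Type*} [Countable 𝒳] (k : ℕ)
    (P : 𝒳 → ℝ) (hP0 : ∀ x, 0 ≤ P x) (hP1 : ∑' x, P x = 1)
    (Q : Fin k → 𝒳 → ℝ) (hQ0 : ∀ j x, 0 ≤ Q j x)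
    (β : Fin k → ℝ) (hβ : ∀ j, 0 ≤ β j) :
    sInf {e : ℝ | e ∈ Set.Icc (0 : ℝ) 1 ∧
        ∃ t : 𝒳 → ℝ, (∀ x, t x ∈ Set.Icc (0 : ℝ) 1) ∧
          1 - e ≤ ∑' x, P x * t x ∧
          ∀ j, Summable (fun x => Q j x * t x) ∧ (∑' x, Q j x * t x) ≤ β j}
      = sSup {s : ℝ | ∃ γ : Fin k → ℝ, (∀ j, 0 ≤ γ j) ∧
          s = (∑' x, min (P x) (∑ j, γ j * Q j x)) - ∑ j, γ j * β j} := by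
  have hP : Summable P := by
    by_contra h
    rw [tsum_eq_zero_of_not_summable h] at hP1
    exact zero_ne_one hP1
  set E := {e : ℝ | e ∈ Set.Icc (0 : ℝ) 1 ∧
        ∃ t : 𝒳 → ℝ, (∀ x, t x ∈ Set.Icc (0 : ℝ) 1) ∧
          1 - e ≤ ∑' x, P x * t x ∧
          ∀ j, Summable (fun x => Q j x * t x) ∧ (∑' x, Q j x * t x) ≤ β j} with hE
  set S := {s : ℝ | ∃ γ : Fin k → ℝ, (∀ j, 0 ≤ γ j) ∧
          s = (∑' x, min (P x) (∑ j, γ j * Q j x)) - ∑ j, γ j * β j} with hS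
  have h1E : (1 : ℝ) ∈ E := ⟨by simp, fun _ => 0, by simp, by simp, fun j => by
    simpa using hβ j⟩
  have h0S : (0 : ℝ) ∈ S := ⟨fun _ => 0, by simp, by simp [hP0]⟩
  have hweak : ∀ s ∈ S, ∀ e ∈ E, s ≤ e := by
    rintro s ⟨γ, hγ, rfl⟩ e ⟨-, t, ht, he, hQ⟩
    exact dual_le_primal hP0 hP hP1 hQ0 hγ ht he hQ
  have hbE : BddBelow E := ⟨0, fun e he => he.1.1⟩
  have hbS : BddAbove S := ⟨1, fun s hs => hweak s hs 1 h1E⟩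
  refine le_antisymm (le_of_forall_lt_imp_le_of_dense fun d hd => ?_)
    (csSup_le ⟨0, h0S⟩ fun s hs => le_csInf ⟨1, h1E⟩ fun e he => hweak s hs e he)
  rcases lt_or_ge d 0 with hd0 | hd0
  · exact hd0.le.trans (le_csSup hbS h0S)
  have hd1 : d < 1 := hd.trans_le (csInf_le hbE h1E)
  have hA : (1 - d, β) ∉ achievable P Q := by
    rintro ⟨t, ht, hQ⟩
    refine (notMem_of_lt_csInf hd hbE) ⟨⟨hd0, hd1.le⟩, fun x => t x, fun x => (t x).2, ht,
      fun j => ?_⟩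
    have hs : Summable (fun x => Q j x * (t x : ℝ)) :=
      summable_of_sum_le (fun x => mul_nonneg (hQ0 j x) (t x).2.1) (hQ j)
    exact ⟨hs, hs.tsum_le_of_sum_le (hQ j)⟩
  obtain ⟨γ, hγ, h⟩ := exists_dual_of_not_achievable hP0 hP hP1 hQ0 hβ (sub_pos.2 hd1) hA
  rw [sub_sub_cancel] at h
  exact h.trans (le_csSup hbS ⟨γ, hγ, rfl⟩)
end
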